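/- Let r < e^{-2} be a positive real number and let K_t(s) = (t−s)₊^{-1/2} |ln(t−s)₊|^{-1} (interpreted as 0 for s ≥ t). Consider the Volterra operator V : L₂[0,r] → C[0,r], (Vf)(t) = ∫₀ᵗ f(s) K_t(s) ds, and its adjoint V* : M[0,r] → L₂[0,r], (V*μ)(s) = ∫₀ʳ K_t(s) μ(dt), where M[0,r] is the space of signed measures of finite variation. Then there exists a numerical constant C such that for all positive integers n, max{ e_n(V), e_n(V*) } ≤ C · n^{-1/2}. -/

import Mathlib

open scoped ENNReal
open MeasureTheory

/-- The critical Volterra kernel `K_t(s) = (t-s)₊^{-1/2} |ln (t-s)₊|^{-1}`,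
interpreted as `0` for `s ≥ t`. -/
noncomputable def Ker (t s : ℝ) : ℝ :=
  if s < t then (t - s) ^ (-(1 : ℝ) / 2) * |Real.log (t - s)|⁻¹ else 0

/-- The adjoint operator `V* : M[0,r] → L₂[0,r]`, `(V*μ)(s) = ∫₀ʳ K_t(s) μ(dt)`,
where the integral against the signed measure `μ` is computed through its Jordan
decomposition. -/
noncomputable def VstarInt (μ : MeasureTheory.SignedMeasure ℝ) (s : ℝ) : ℝ :=
  (∫ t, Ker t s ∂μ.toJordanDecomposition.posPart) -
    ∫ t, Ker t s ∂μ.toJordanDecomposition.negPart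

/-- The Volterra operator `V : L₂[0,r] → C[0,r]`, `(Vf)(t) = ∫₀ᵗ f(s) K_t(s) ds`. -/
noncomputable def Vint (f : ℝ → ℝ) (t : ℝ) : ℝ := ∫ s in Set.Ioc (0 : ℝ) t, f s * Ker t s

open Set Filter
open scoped FourierTransform SchwartzMap Topology

/-!
On both sides the object to cover is the set `T` of potentials `V*(μ - ν)`, a convex symmetric
subset of the Hilbert space `L₂`.

By Plancherel, the energy `‖V*(μ - ν)‖²` is governed by the Fourier transform of the kernel, whose
square at frequency `2ʲ` is of order `2⁻ʲ j⁻²`. Comparing with the Fourier transforms of the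
indicators of `[0, 2⁻ʲ)` bounds the energy by the weighted dyadic sum
`∑ j, (j + 10)⁻² ∑ k, (μ - ν)(I j k)²`, where `I j k` is the `k`-th dyadic interval of length `2⁻ʲ`,
up to a truncation error `O(1 / n)` for the generations `j ≥ n`.

To cover `T`, record for each dyadic interval the integer part of `n μ(I j k) / (j + 10)`, and stop
at an interval where it vanishes. Measures with the same record are at squared distance `O(1 / n)`:
the coarsening of the rounding unit with `j` is exactly what the weights `(j + 10)⁻²` permit. A
record is a labelled binary tree with a bit budget of `O(n)`, so there are at most `exp (O(n))`
records. This settles `V*`.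

For `V`, a net for the dual problem is found by replacing `f` in the unit ball by its metric
projection to a multiple of the closure of `T`, which is covered by the first part. The error is
treated in the same way at twice the scale, and the resulting exponents form a geometric series.
-/

theorem eLpNorm_two_sq {α E : Type*} [MeasurableSpace α] [NormedAddCommGroup E] (f : α → E)
    (μ : Measure α) : eLpNorm f 2 μ ^ 2 = ∫⁻ x, ‖f x‖ₑ ^ 2 ∂μ := by
  simpa using eLpNorm_nnreal_pow_eq_lintegral (f := f) (μ := μ) (p := 2) two_ne_zero

section Plancherel

variable {V E : Type*} [NormedAddCommGroup V] [InnerProductSpace ℝ V] [FiniteDimensional ℝ V]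
  [MeasurableSpace V] [BorelSpace V] [NormedAddCommGroup E] [InnerProductSpace ℂ E]
  [CompleteSpace E] {f : V → E}

theorem integral_fourier_smul_eq (g : 𝓢(V, ℂ)) (hf : Integrable f) :
    ∫ x, 𝓕 g x • f x = ∫ x, g x • 𝓕 f x := by
  rw [SchwartzMap.fourier_coe]
  have h := VectorFourier.integral_fourierIntegral_smul_eq_flip (L := innerₗ V) (μ := volume)
    (ν := volume) Real.continuous_fourierChar continuous_inner g.integrable hf
  rwa [flip_innerₗ] at h

theorem fourier_toLp_ae_eq (h1 : Integrable f) (h2 : MemLp f 2) :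
    (𝓕 (h2.toLp f) : Lp E 2 (volume : Measure V)) =ᵐ[volume] 𝓕 f := by
  have hcont : Continuous (𝓕 f) :=
    VectorFourier.fourierIntegral_continuous Real.continuous_fourierChar continuous_inner h1
  refine ae_eq_of_integral_contDiff_smul_eq ((Lp.memLp _).locallyIntegrable (by norm_num))
    hcont.locallyIntegrable fun g hg hgc ↦ ?_
  have hgc' : HasCompactSupport (Complex.ofRealCLM ∘ g) := hgc.comp_left rfl
  let G : 𝓢(V, ℂ) := hgc'.toSchwartzMap (Complex.ofRealCLM.contDiff.comp hg)
  have hG (F : V → E) : ∫ x, G x • F x = ∫ x, g x • F x :=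
    integral_congr_ae (.of_forall fun x ↦ Complex.coe_smul (g x) (F x))
  calc ∫ x, g x • (𝓕 (h2.toLp f) : Lp E 2 (volume : Measure V)) x
      = ∫ x, 𝓕 G x • (h2.toLp f) x := by
        rw [← hG, ← Lp.toTemperedDistribution_apply, ← Lp.fourier_toTemperedDistribution_eq,
          TemperedDistribution.fourier_apply, Lp.toTemperedDistribution_apply]
    _ = ∫ x, 𝓕 G x • f x := integral_congr_ae <| by
        filter_upwards [h2.coeFn_toLp] with x hx using by rw [hx]
    _ = ∫ x, g x • 𝓕 f x := by rw [integral_fourier_smul_eq G h1, hG]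

theorem eLpNorm_two_fourier (h1 : Integrable f) (h2 : MemLp f 2) :
    eLpNorm (𝓕 f) 2 = eLpNorm f 2 := by
  rw [← eLpNorm_congr_ae (fourier_toLp_ae_eq h1 h2), ← eLpNorm_congr_ae h2.coeFn_toLp,
    ← Lp.enorm_def, ← Lp.enorm_def, ← ofReal_norm, ← ofReal_norm, Lp.norm_fourier_eq]

theorem lintegral_enorm_fourier_sq (h1 : Integrable f) (h2 : MemLp f 2) :
    ∫⁻ x, ‖𝓕 f x‖ₑ ^ 2 = ∫⁻ x, ‖f x‖ₑ ^ 2 := by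
  rw [← eLpNorm_two_sq, ← eLpNorm_two_sq, eLpNorm_two_fourier h1 h2]

end Plancherel

section CriticalKernel

/-- The kernel `u₊^{-1/2} |log u₊|⁻¹` of the Volterra operator as a function of the difference
`u = t - s`, cut off at `exp (-2)` so that it is integrable and decreasing on `(0, ∞)`. -/
noncomputable def criticalKernel : ℝ → ℝ :=
  (Ioo 0 (Real.exp (-2))).indicator fun u ↦ (√u * -Real.log u)⁻¹

variable {u v : ℝ}

theorem log_lt_neg_two (hu : u ∈ Ioo 0 (Real.exp (-2))) : Real.log u < -2 :=
  (Real.log_lt_iff_lt_exp hu.1).2 hu.2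

theorem criticalKernel_of_mem (hu : u ∈ Ioo 0 (Real.exp (-2))) :
    criticalKernel u = (√u * -Real.log u)⁻¹ :=
  indicator_of_mem hu _

theorem criticalKernel_of_notMem (hu : u ∉ Ioo 0 (Real.exp (-2))) : criticalKernel u = 0 :=
  indicator_of_notMem hu _

theorem criticalKernel_of_nonpos (hu : u ≤ 0) : criticalKernel u = 0 :=
  criticalKernel_of_notMem fun h ↦ h.1.not_ge hu

theorem criticalKernel_nonneg (u : ℝ) : 0 ≤ criticalKernel u :=
  indicator_nonneg (fun u hu ↦ inv_nonneg.2 <|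
    mul_nonneg (Real.sqrt_nonneg u) (by linarith [log_lt_neg_two hu])) u

theorem measurable_criticalKernel : Measurable criticalKernel :=
  Measurable.indicator (by fun_prop) measurableSet_Ioo

theorem antitoneOn_criticalKernel : AntitoneOn criticalKernel (Ioi 0) := by
  intro u hu v _ huv
  by_cases hv : v ∈ Ioo 0 (Real.exp (-2))
  · have hu' : u ∈ Ioo 0 (Real.exp (-2)) := ⟨hu, huv.trans_lt hv.2⟩
    have hmem {w : ℝ} (hw : w ∈ Ioo 0 (Real.exp (-2))) : w⁻¹ ∈ Ici (Real.exp 2) := by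
      rw [mem_Ici, le_inv_comm₀ (Real.exp_pos _) hw.1, ← Real.exp_neg]
      exact hw.2.le
    have h := Real.log_div_sqrt_antitoneOn (hmem hv) (hmem hu') (inv_anti₀ hu huv)
    simp only [Real.log_inv, Real.sqrt_inv, div_inv_eq_mul] at h
    rw [criticalKernel_of_mem hv, criticalKernel_of_mem hu', mul_comm √v, mul_comm √u]
    exact inv_anti₀ (mul_pos (by linarith [log_lt_neg_two hu']) (Real.sqrt_pos.2 hu)) h
  · rw [criticalKernel_of_notMem hv]
    exact criticalKernel_nonneg u

theorem criticalKernel_le_rpow (hv : v ≤ Real.exp (-2)) (hu : u ∈ Ioc 0 v) :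
    criticalKernel u ≤ u ^ (-(1 : ℝ) / 2) * (-Real.log v)⁻¹ := by
  have hlog : Real.log v ≤ -2 := (Real.log_le_iff_le_exp (hu.1.trans_le hu.2)).2 hv
  have hpow : u ^ (-(1 : ℝ) / 2) = (√u)⁻¹ := by
    rw [Real.sqrt_eq_rpow, ← Real.rpow_neg hu.1.le, neg_div]
  by_cases hmem : u ∈ Ioo 0 (Real.exp (-2))
  · rw [criticalKernel_of_mem hmem, mul_inv, hpow]
    gcongr
    · linarith
    · exact hu.1
    · exact hu.2
  · rw [criticalKernel_of_notMem hmem, hpow]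
    exact mul_nonneg (by positivity) (inv_nonneg.2 (by linarith))

theorem integrableOn_rpow_neg_half (hv : 0 ≤ v) :
    IntegrableOn (fun u : ℝ ↦ u ^ (-(1 : ℝ) / 2)) (Ioc 0 v) := by
  rw [← intervalIntegrable_iff_integrableOn_Ioc_of_le hv]
  exact intervalIntegral.intervalIntegrable_rpow' (by norm_num)

theorem setIntegral_rpow_neg_half (hv : 0 ≤ v) :
    ∫ u in Ioc 0 v, u ^ (-(1 : ℝ) / 2) = 2 * √v := by
  rw [← intervalIntegral.integral_of_le hv, integral_rpow (Or.inl (by norm_num)),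
    Real.sqrt_eq_rpow]
  norm_num
  ring

theorem support_criticalKernel_subset :
    Function.support criticalKernel ⊆ Ioc 0 (Real.exp (-2)) := fun _ hu ↦
  Ioo_subset_Ioc_self (of_not_not fun h ↦ hu (criticalKernel_of_notMem h))

theorem integrable_criticalKernel : Integrable criticalKernel := by
  refine (integrableOn_iff_integrable_of_support_subset support_criticalKernel_subset).1 ?_
  refine ((integrableOn_rpow_neg_half (Real.exp_pos _).le).mul_const
    (-Real.log (Real.exp (-2)))⁻¹).mono' measurable_criticalKernel.aestronglyMeasurable ?_
  filter_upwards [ae_restrict_mem measurableSet_Ioc] with u hu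
  exact (Real.norm_of_nonneg (criticalKernel_nonneg u)).trans_le (criticalKernel_le_rpow le_rfl hu)

theorem setIntegral_criticalKernel_le (hv0 : 0 ≤ v) (hv : v ≤ Real.exp (-2)) :
    ∫ u in Ioc 0 v, criticalKernel u ≤ 2 * √v * (-Real.log v)⁻¹ := by
  rw [← setIntegral_rpow_neg_half hv0, ← integral_mul_const]
  exact setIntegral_mono_on integrable_criticalKernel.integrableOn
    ((integrableOn_rpow_neg_half hv0).mul_const _) measurableSet_Ioc
    fun u hu ↦ criticalKernel_le_rpow hv hu

theorem integral_criticalKernel_le_one : ∫ u, criticalKernel u ≤ 1 := by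
  rw [← setIntegral_eq_integral_of_forall_compl_eq_zero (s := Ioc 0 (Real.exp (-2)))
    fun x hx ↦ Function.notMem_support.1 fun h ↦ hx (support_criticalKernel_subset h)]
  refine (setIntegral_criticalKernel_le (Real.exp_pos _).le le_rfl).trans ?_
  have hsqrt : √(Real.exp (-2)) ≤ 1 := Real.sqrt_le_one.2 (Real.exp_le_one_iff.2 (by norm_num))
  rw [Real.log_exp]
  linarith

-- The square of the kernel is the derivative of `-1 / log`, which is continuous at `0` because
-- `Real.log 0 = 0`.
theorem continuousOn_neg_inv_log :
    ContinuousOn (fun u : ℝ ↦ -(Real.log u)⁻¹) (Icc 0 (Real.exp (-2))) := by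
  intro u hu
  refine ContinuousAt.continuousWithinAt ?_
  rcases hu.1.eq_or_lt with rfl | h0
  · have h : Tendsto (fun u : ℝ ↦ -(Real.log u)⁻¹) (𝓝[≠] 0) (𝓝 0) := by
      simpa using (tendsto_inv_atBot_zero.comp Real.tendsto_log_nhdsNE_zero).neg
    rw [← continuousAt_update_same, Function.update_eq_self_iff.2 (by simp)] at h
    exact h
  · have hlog : Real.log u ≤ -2 := (Real.log_le_iff_le_exp h0).2 hu.2
    exact ((Real.continuousAt_log h0.ne').inv₀ (by linarith)).neg

theorem integrable_criticalKernel_sq : Integrable fun u ↦ criticalKernel u ^ 2 := by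
  have hsupp : Function.support (fun u ↦ criticalKernel u ^ 2) ⊆ Ioc 0 (Real.exp (-2)) :=
    fun u hu ↦ support_criticalKernel_subset fun h ↦ hu (by simp [h])
  refine (integrableOn_iff_integrable_of_support_subset hsupp).1 ?_
  have hderiv (u : ℝ) (hu : u ∈ Ioo 0 (Real.exp (-2))) :
      HasDerivAt (fun u ↦ -(Real.log u)⁻¹) (-(-u⁻¹ / Real.log u ^ 2)) u :=
    ((Real.hasDerivAt_log hu.1.ne').inv (by linarith [log_lt_neg_two hu])).neg
  have hint := intervalIntegral.integrableOn_deriv_of_nonneg continuousOn_neg_inv_log hderiv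
    fun u hu ↦ by rw [neg_div, neg_neg]; exact div_nonneg (inv_nonneg.2 hu.1.le) (sq_nonneg _)
  rw [integrableOn_Ioc_iff_integrableOn_Ioo] at hint ⊢
  refine hint.congr_fun (fun u hu ↦ ?_) measurableSet_Ioo
  change -(-u⁻¹ / Real.log u ^ 2) = criticalKernel u ^ 2
  rw [criticalKernel_of_mem hu, inv_pow, mul_pow, Real.sq_sqrt hu.1.le, neg_sq, mul_inv, neg_div,
    neg_neg, div_eq_mul_inv]

theorem memLp_criticalKernel : MemLp criticalKernel 2 :=
  (memLp_two_iff_integrable_sq measurable_criticalKernel.aestronglyMeasurable).2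
    integrable_criticalKernel_sq

theorem Ker_eq_criticalKernel {t s : ℝ} (h : t - s < Real.exp (-2)) :
    Ker t s = criticalKernel (t - s) := by
  rw [Ker]
  split_ifs with hst
  · have hmem : t - s ∈ Ioo 0 (Real.exp (-2)) := ⟨sub_pos.2 hst, h⟩
    rw [criticalKernel_of_mem hmem, abs_of_neg (by linarith [log_lt_neg_two hmem]), mul_inv,
      Real.sqrt_eq_rpow, ← Real.rpow_neg hmem.1.le, neg_div]
  · exact (criticalKernel_of_nonpos (by linarith)).symm

end CriticalKernel

section DecreasingKernel

variable {φ : ℝ → ℝ}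

theorem integral_abs_sub_translate_le (hφ : Integrable φ) (hnonneg : ∀ u, 0 ≤ φ u)
    (hzero : ∀ u ≤ 0, φ u = 0) (hanti : AntitoneOn φ (Ioi 0)) {v : ℝ} (hv : 0 ≤ v) :
    ∫ u, |φ u - φ (u + v)| ≤ 2 * ∫ u in Ioc 0 v, φ u := by
  have habs (u : ℝ) :
      |φ u - φ (u + v)| = (φ u - φ (u + v)) + 2 * (Ioc 0 v).indicator φ (u + v) := by
    rcases lt_or_ge 0 u with hu | hu
    · have hle : φ (u + v) ≤ φ u := hanti hu (hu.trans_le (by linarith)) (by linarith)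
      rw [indicator_of_notMem fun h ↦ by linarith [h.2], abs_of_nonneg (by linarith)]
      ring
    rw [hzero u hu]
    rcases lt_or_ge 0 (u + v) with huv | huv
    · rw [indicator_of_mem (show u + v ∈ Ioc 0 v from ⟨huv, by linarith⟩), zero_sub, abs_neg,
        abs_of_nonneg (hnonneg _)]
      ring
    · simp [hzero _ huv, indicator_of_notMem fun h : u + v ∈ Ioc 0 v ↦ h.1.not_ge huv]
  have hsub : Integrable fun u ↦ φ u - φ (u + v) := hφ.sub (hφ.comp_add_right v)
  have hind : Integrable ((Ioc 0 v).indicator φ) := hφ.indicator measurableSet_Ioc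
  refine le_of_eq ?_
  simp_rw [habs]
  rw [integral_add hsub ((hind.comp_add_right v).const_mul 2),
    integral_sub hφ (hφ.comp_add_right v), integral_add_right_eq_self φ v, sub_self, zero_add,
    integral_const_mul, integral_add_right_eq_self ((Ioc 0 v).indicator φ) v,
    integral_indicator measurableSet_Ioc]

theorem integral_abs_sub_translate_abs (φ : ℝ → ℝ) (v : ℝ) :
    ∫ u, |φ u - φ (u + |v|)| = ∫ u, |φ u - φ (u + v)| := by
  rcases abs_choice v with h | h <;> rw [h]
  rw [← integral_add_right_eq_self (fun u ↦ |φ u - φ (u + -v)|) v]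
  simp only [add_neg_cancel_right, abs_sub_comm]

theorem norm_fourier_le_half_integral_translate (hφ : Integrable φ) {ξ : ℝ} (hξ : ξ ≠ 0) :
    ‖𝓕 (fun u ↦ (φ u : ℂ)) ξ‖ ≤ 1 / 2 * ∫ u, |φ u - φ (u + 1 / (2 * ξ))| := by
  have hhalf : (1 / (2 * ‖ξ‖ ^ 2)) • ξ = 1 / (2 * ξ) := by
    rw [Real.norm_eq_abs, sq_abs, smul_eq_mul]
    field_simp
  rw [Real.fourier_eq, fourierIntegral_eq_half_sub_half_period_translate hξ hφ.ofReal, norm_smul]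
  simp only [hhalf]
  gcongr
  · simp
  · refine (norm_integral_le_integral_norm _).trans_eq (integral_congr_ae (.of_forall fun u ↦ ?_))
    simp only [Circle.norm_smul, ← Complex.ofReal_sub, Complex.norm_real, Real.norm_eq_abs]

theorem norm_fourier_le_setIntegral (hφ : Integrable φ) (hnonneg : ∀ u, 0 ≤ φ u)
    (hzero : ∀ u ≤ 0, φ u = 0) (hanti : AntitoneOn φ (Ioi 0)) {ξ : ℝ} (hξ : ξ ≠ 0) :
    ‖𝓕 (fun u ↦ (φ u : ℂ)) ξ‖ ≤ ∫ u in Ioc 0 (1 / (2 * |ξ|)), φ u := by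
  have h := norm_fourier_le_half_integral_translate hφ hξ
  rw [← integral_abs_sub_translate_abs, abs_div, abs_mul, abs_one, abs_two] at h
  linarith [integral_abs_sub_translate_le hφ hnonneg hzero hanti
    (show 0 ≤ 1 / (2 * |ξ|) by positivity)]

theorem norm_fourier_le_integral (hnonneg : ∀ u, 0 ≤ φ u) (ξ : ℝ) :
    ‖𝓕 (fun u ↦ (φ u : ℂ)) ξ‖ ≤ ∫ u, φ u := by
  refine (VectorFourier.norm_fourierIntegral_le_integral_norm _ _ _ _ _).trans_eq ?_
  simp only [Complex.norm_real, Real.norm_of_nonneg (hnonneg _)]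

end DecreasingKernel

section Box

/-- The indicator function of `[0, h)`; the potentials of these boxes are the increments of the
distribution function over intervals of length `h`. -/
noncomputable def box (h : ℝ) : ℝ → ℝ :=
  (Ico 0 h).indicator 1

variable {h ξ : ℝ}

theorem measurable_box (h : ℝ) : Measurable (box h) :=
  measurable_one.indicator measurableSet_Ico

theorem integrable_box (h : ℝ) : Integrable (box h) :=
  (integrable_indicator_iff measurableSet_Ico).2 (integrableOn_const (by simp))

theorem memLp_box (h : ℝ) : MemLp (box h) 2 :=
  memLp_indicator_const 2 measurableSet_Ico 1 (Or.inr (by simp))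

theorem fourier_box (hh : 0 ≤ h) (ξ : ℝ) :
    𝓕 (fun u ↦ (box h u : ℂ)) ξ =
      ∫ u in (0 : ℝ)..h, Complex.exp (-(2 * Real.pi * ξ) * Complex.I * u) := by
  rw [Real.fourier_real_eq, intervalIntegral.integral_of_le hh, ← integral_Ico_eq_integral_Ioc,
    ← integral_indicator measurableSet_Ico]
  congr 1 with u
  by_cases hu : u ∈ Ico 0 h
  · rw [box, indicator_of_mem hu, indicator_of_mem hu, Circle.smul_def, Real.fourierChar_apply]
    simp only [Pi.one_apply, Complex.ofReal_one, smul_eq_mul, mul_one]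
    congr 1
    push_cast
    ring
  · simp [box, indicator_of_notMem hu]

theorem norm_fourier_box (hh : 0 ≤ h) (hξ : ξ ≠ 0) :
    ‖𝓕 (fun u ↦ (box h u : ℂ)) ξ‖ = |Real.sin (Real.pi * ξ * h)| / (Real.pi * |ξ|) := by
  have hexp : Complex.exp (-(2 * Real.pi * ξ) * Complex.I * h) -
      Complex.exp (-(2 * Real.pi * ξ) * Complex.I * (0 : ℝ)) =
        Complex.exp (Complex.I * (-(2 * Real.pi * ξ * h) : ℝ)) - 1 := by
    rw [Complex.ofReal_zero, mul_zero, Complex.exp_zero]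
    congr 2
    push_cast
    ring
  have hden : ‖-(2 * (Real.pi : ℂ) * ξ) * Complex.I‖ = 2 * (Real.pi * |ξ|) := by
    simp [abs_of_pos Real.pi_pos, mul_assoc]
  rw [fourier_box hh, integral_exp_mul_complex (by simp [hξ, Real.pi_ne_zero]), norm_div, hexp,
    Complex.norm_exp_I_mul_ofReal_sub_one, hden, norm_mul, Real.norm_two,
    mul_div_mul_left _ _ two_ne_zero, Real.norm_eq_abs, ← abs_neg, ← Real.sin_neg]
  ring_nf

theorem half_le_norm_fourier_box (hh : 0 < h) (hξ : h * |ξ| ≤ 1 / 2) :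
    h / 2 ≤ ‖𝓕 (fun u ↦ (box h u : ℂ)) ξ‖ := by
  rcases eq_or_ne ξ 0 with rfl | h0
  · rw [fourier_box hh.le]
    simp [abs_of_pos hh, hh.le]
  have habs : |Real.pi * ξ * h| = Real.pi * (h * |ξ|) := by
    rw [abs_mul, abs_mul, abs_of_pos Real.pi_pos, abs_of_pos hh]
    ring
  have hjordan : 2 / Real.pi * |Real.pi * ξ * h| ≤ |Real.sin (Real.pi * ξ * h)| :=
    Real.mul_abs_le_abs_sin (by nlinarith [Real.pi_pos])
  rw [norm_fourier_box hh.le h0, le_div_iff₀ (by positivity)]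
  refine le_trans ?_ hjordan
  rw [habs, ← mul_assoc (2 / Real.pi), div_mul_cancel₀ _ Real.pi_ne_zero]
  nlinarith [Real.pi_le_four, mul_nonneg hh.le (abs_nonneg ξ)]

end Box

section SymbolDomination

/-- The weight `1 / (j + 10)²` of the dyadic scale `2⁻ʲ`: up to a constant, the square of
`1 / |log 2⁻ʲ|`. The shift by `10` is needed in the estimate of the bit budget. -/
noncomputable def scaleWeight (j : ℕ) : ℝ := ((j : ℝ) + 10)⁻¹ ^ 2

theorem inv_two_pow_le_exp_neg_two {i : ℕ} (hi : 3 ≤ i) : ((2 : ℝ) ^ i)⁻¹ ≤ Real.exp (-2) := by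
  rw [Real.exp_neg]
  refine inv_anti₀ (Real.exp_pos _) ?_
  have h8 : (2 : ℝ) ^ 3 ≤ 2 ^ i := pow_le_pow_right₀ one_le_two hi
  have hexp : Real.exp 2 = Real.exp 1 ^ 2 := by rw [← Real.exp_nat_mul]; norm_num
  nlinarith [Real.exp_one_lt_d9, Real.exp_pos 1]

theorem norm_fourier_criticalKernel_sq_le {i : ℕ} (hi : 3 ≤ i) {ξ : ℝ} (hξ : 2 ^ i ≤ 2 * |ξ|) :
    ‖𝓕 (fun u ↦ (criticalKernel u : ℂ)) ξ‖ ^ 2 ≤ 4 / (2 ^ i * (i * Real.log 2) ^ 2) := by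
  have hξ0 : ξ ≠ 0 := by
    rintro rfl
    simp only [abs_zero, mul_zero] at hξ
    exact hξ.not_gt (by positivity)
  have hpos : (0 : ℝ) ≤ ((2 : ℝ) ^ i)⁻¹ := by positivity
  have hbound : ‖𝓕 (fun u ↦ (criticalKernel u : ℂ)) ξ‖ ≤
      2 * √((2 : ℝ) ^ i)⁻¹ * (i * Real.log 2)⁻¹ := calc
    _ ≤ ∫ u in Ioc 0 (1 / (2 * |ξ|)), criticalKernel u :=
      norm_fourier_le_setIntegral integrable_criticalKernel criticalKernel_nonneg
        (fun _ ↦ criticalKernel_of_nonpos) antitoneOn_criticalKernel hξ0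
    _ ≤ ∫ u in Ioc 0 ((2 : ℝ) ^ i)⁻¹, criticalKernel u := by
      refine setIntegral_mono_set integrable_criticalKernel.integrableOn
        (.of_forall criticalKernel_nonneg) (Ioc_subset_Ioc_right ?_).eventuallyLE
      rw [one_div]
      exact inv_anti₀ (by positivity) hξ
    _ ≤ _ := by
      simpa only [Real.log_inv, Real.log_pow, neg_neg] using
        setIntegral_criticalKernel_le hpos (inv_two_pow_le_exp_neg_two hi)
  calc _ ≤ (2 * √((2 : ℝ) ^ i)⁻¹ * (i * Real.log 2)⁻¹) ^ 2 := by gcongr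
    _ = _ := by
      rw [mul_pow, mul_pow, Real.sq_sqrt hpos, inv_pow]
      field_simp
      norm_num

theorem norm_fourier_criticalKernel_sq_le_one (ξ : ℝ) :
    ‖𝓕 (fun u ↦ (criticalKernel u : ℂ)) ξ‖ ^ 2 ≤ 1 :=
  pow_le_one₀ (norm_nonneg _) <|
    (norm_fourier_le_integral criticalKernel_nonneg ξ).trans integral_criticalKernel_le_one

theorem scaleWeight_mul_norm_fourier_box_ge {j : ℕ} {ξ : ℝ} (hξ : 2 * |ξ| ≤ 2 ^ j) :
    1500 / (((j : ℝ) + 10) ^ 2 * 2 ^ j) ≤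
      6000 * (scaleWeight j * 2 ^ j) * ‖𝓕 (fun u ↦ (box (2⁻¹ ^ j) u : ℂ)) ξ‖ ^ 2 := by
  have hbox : (2 : ℝ)⁻¹ ^ j / 2 ≤ ‖𝓕 (fun u ↦ (box (2⁻¹ ^ j) u : ℂ)) ξ‖ := by
    refine half_le_norm_fourier_box (by positivity) ?_
    rw [inv_pow, inv_mul_le_iff₀ (by positivity)]
    linarith
  calc 1500 / (((j : ℝ) + 10) ^ 2 * 2 ^ j)
      = 6000 * (scaleWeight j * 2 ^ j) * ((2 : ℝ)⁻¹ ^ j / 2) ^ 2 := by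
        rw [scaleWeight, inv_pow, inv_pow]
        field_simp
        norm_num
    _ ≤ _ := by rw [scaleWeight]; gcongr

theorem norm_fourier_criticalKernel_sq_le_scale {i : ℕ} (hi : 3 ≤ i) {ξ : ℝ}
    (hξ : 2 ^ i ≤ 2 * |ξ|) :
    ‖𝓕 (fun u ↦ (criticalKernel u : ℂ)) ξ‖ ^ 2 ≤
      1500 / ((((i + 1 : ℕ) : ℝ) + 10) ^ 2 * 2 ^ (i + 1)) := by
  have hi' : (3 : ℝ) ≤ i := by exact_mod_cast hi
  have hlog : (i : ℝ) * 0.69 ≤ i * Real.log 2 := by gcongr; linarith [Real.log_two_gt_d9]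
  have hsq : ((i : ℝ) * 0.69) ^ 2 ≤ (i * Real.log 2) ^ 2 := by gcongr
  have hquad : ((i : ℝ) + 1 + 10) ^ 2 * 8 ≤ 1500 * (i * Real.log 2) ^ 2 := by nlinarith
  have h2i : (0 : ℝ) < 2 ^ i := by positivity
  refine (norm_fourier_criticalKernel_sq_le hi hξ).trans ?_
  rw [div_le_div_iff₀ (by positivity) (by positivity), pow_succ (2 : ℝ) i]
  push_cast
  nlinarith

theorem exists_norm_fourier_criticalKernel_sq_le (ξ : ℝ) :
    ∃ j : ℕ, ‖𝓕 (fun u ↦ (criticalKernel u : ℂ)) ξ‖ ^ 2 ≤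
      6000 * (scaleWeight j * 2 ^ j) * ‖𝓕 (fun u ↦ (box (2⁻¹ ^ j) u : ℂ)) ξ‖ ^ 2 := by
  by_cases hξ : 2 * |ξ| ≤ 2 ^ 3
  · refine ⟨3, (norm_fourier_criticalKernel_sq_le_one ξ).trans
      (le_trans ?_ (scaleWeight_mul_norm_fourier_box_ge hξ))⟩
    norm_num
  · obtain ⟨i, hle, hlt⟩ := exists_nat_pow_near (show 1 ≤ 2 * |ξ| by linarith) one_lt_two
    have hi : 3 < i + 1 := (pow_lt_pow_iff_right₀ one_lt_two).1 ((not_le.1 hξ).trans hlt)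
    exact ⟨i + 1, (norm_fourier_criticalKernel_sq_le_scale (by omega) hle).trans
      (scaleWeight_mul_norm_fourier_box_ge hlt.le)⟩

end SymbolDomination

section Energy

/-- The squared `L₂` norm of a real function, as an extended nonnegative number. -/
noncomputable def energy (f : ℝ → ℝ) : ℝ≥0∞ := ∫⁻ s, ENNReal.ofReal (f s ^ 2)

theorem enorm_sq_eq_ofReal (x : ℝ) : ‖x‖ₑ ^ 2 = ENNReal.ofReal (x ^ 2) := by
  rw [Real.enorm_eq_ofReal_abs, ← ENNReal.ofReal_pow (abs_nonneg x), sq_abs]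

theorem energy_eq_eLpNorm_sq (f : ℝ → ℝ) : energy f = eLpNorm f 2 ^ 2 := by
  rw [eLpNorm_two_sq]
  simp only [enorm_sq_eq_ofReal, energy]

theorem energy_eq_lintegral_fourier {f : ℝ → ℝ} (h1 : Integrable f) (h2 : MemLp f 2) :
    energy f = ∫⁻ ξ, ‖𝓕 (fun s ↦ (f s : ℂ)) ξ‖ₑ ^ 2 := by
  rw [lintegral_enorm_fourier_sq h1.ofReal h2.ofReal]
  simp only [energy, ← enorm_sq_eq_ofReal, enorm_eq_nnnorm, Complex.nnnorm_real]

end Energy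

section Potential

theorem enorm_integral_sq_le {α E : Type*} [MeasurableSpace α] [NormedAddCommGroup E]
    [NormedSpace ℝ E] (μ : Measure α) {f : α → E} (hf : AEStronglyMeasurable f μ) :
    ‖∫ x, f x ∂μ‖ₑ ^ 2 ≤ μ univ * ∫⁻ x, ‖f x‖ₑ ^ 2 ∂μ := by
  have h := eLpNorm_le_eLpNorm_mul_rpow_measure_univ one_le_two hf
  rw [eLpNorm_one_eq_lintegral_enorm] at h
  calc ‖∫ x, f x ∂μ‖ₑ ^ 2 ≤ (∫⁻ x, ‖f x‖ₑ ∂μ) ^ 2 := by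
        gcongr
        exact enorm_integral_le_lintegral_enorm f
    _ ≤ (eLpNorm f 2 μ * μ univ ^ (1 / (1 : ℝ≥0∞).toReal - 1 / (2 : ℝ≥0∞).toReal)) ^ 2 := by
        gcongr
    _ = μ univ * ∫⁻ x, ‖f x‖ₑ ^ 2 ∂μ := by
        rw [mul_pow, eLpNorm_two_sq, ← ENNReal.rpow_natCast, ← ENNReal.rpow_mul, mul_comm]
        norm_num

/-- The potential `s ↦ ∫ φ (t - s) μ(dt)` of a measure `μ` with respect to a difference kernel `φ`;
`V*` sends `μ` to its potential with respect to `criticalKernel`. -/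
noncomputable def potential (φ : ℝ → ℝ) (μ : Measure ℝ) (s : ℝ) : ℝ := ∫ t, φ (t - s) ∂μ

variable {φ : ℝ → ℝ} (hφ : Measurable φ) (μ ν : Measure ℝ) [IsFiniteMeasure μ] [IsFiniteMeasure ν]

section
include hφ

theorem measurable_potential : Measurable (potential φ μ) := by
  have h : StronglyMeasurable (Function.uncurry fun s t : ℝ ↦ φ (t - s)) :=
    (hφ.comp (measurable_snd.sub measurable_fst)).stronglyMeasurable
  exact (h.integral_prod_right (ν := μ)).measurable

theorem integrable_kernel_prod (hint : Integrable φ) :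
    Integrable (fun p : ℝ × ℝ ↦ φ (p.2 - p.1)) (volume.prod μ) := by
  have hmeas : Measurable (fun p : ℝ × ℝ ↦ φ (p.2 - p.1)) :=
    hφ.comp (measurable_snd.sub measurable_fst)
  refine (integrable_prod_iff' hmeas.aestronglyMeasurable).2
    ⟨.of_forall fun t ↦ hint.comp_sub_left t, ?_⟩
  simp only [integral_sub_left_eq_self (fun u ↦ ‖φ u‖) volume]
  exact integrable_const _

theorem integrable_potential (hint : Integrable φ) : Integrable (potential φ μ) :=
  (integrable_kernel_prod hφ μ hint).integral_prod_left

theorem energy_potential_le : energy (potential φ μ) ≤ μ univ ^ 2 * energy φ := by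
  have hmeas : Measurable fun p : ℝ × ℝ ↦ ‖φ (p.2 - p.1)‖ₑ ^ 2 :=
    (hφ.comp (measurable_snd.sub measurable_fst)).enorm.pow_const 2
  simp only [energy, ← enorm_sq_eq_ofReal]
  calc ∫⁻ s, ‖potential φ μ s‖ₑ ^ 2
      ≤ ∫⁻ s, μ univ * ∫⁻ t, ‖φ (t - s)‖ₑ ^ 2 ∂μ := lintegral_mono fun s ↦
        enorm_integral_sq_le μ (hφ.comp (measurable_id.sub_const s)).aestronglyMeasurable
    _ = μ univ * ∫⁻ t, (∫⁻ s, ‖φ (t - s)‖ₑ ^ 2) ∂μ := by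
        rw [lintegral_const_mul _ (Measurable.lintegral_prod_right hmeas),
          lintegral_lintegral_swap (f := fun s t ↦ ‖φ (t - s)‖ₑ ^ 2) hmeas.aemeasurable]
    _ = μ univ * ∫⁻ _, (∫⁻ u, ‖φ u‖ₑ ^ 2) ∂μ := by
        simp only [lintegral_sub_left_eq_self (fun u ↦ ‖φ u‖ₑ ^ 2)]
    _ = μ univ ^ 2 * ∫⁻ u, ‖φ u‖ₑ ^ 2 := by rw [lintegral_const]; ring

theorem memLp_potential (hL2 : MemLp φ 2) : MemLp (potential φ μ) 2 := by
  refine ⟨(measurable_potential hφ μ).aestronglyMeasurable, ?_⟩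
  have h := energy_potential_le hφ μ
  rw [energy_eq_eLpNorm_sq, energy_eq_eLpNorm_sq, ← mul_pow,
    ENNReal.pow_le_pow_left_iff two_ne_zero] at h
  exact h.trans_lt (ENNReal.mul_lt_top (measure_lt_top μ _) hL2.2)

theorem fourier_potential (hint : Integrable φ) (ξ : ℝ) :
    𝓕 (fun s ↦ (potential φ μ s : ℂ)) ξ =
      𝓕 (fun u ↦ (φ u : ℂ)) (-ξ) * charFun μ (-(2 * Real.pi * ξ)) := by
  have hchar : charFun μ (-(2 * Real.pi * ξ)) = ∫ t, (Real.fourierChar (-(t * ξ)) : ℂ) ∂μ := by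
    rw [charFun_apply_real]
    congr with t
    rw [Real.fourierChar_apply]
    push_cast
    ring_nf
  have hchange (t : ℝ) : ∫ s, (Real.fourierChar (-(s * ξ)) : ℂ) * (φ (t - s) : ℂ) =
      𝓕 (fun u ↦ (φ u : ℂ)) (-ξ) * (Real.fourierChar (-(t * ξ)) : ℂ) := by
    rw [← integral_sub_left_eq_self _ volume t, Real.fourier_real_eq, ← integral_mul_const]
    congr 1 with u
    rw [show -((t - u) * ξ) = -(u * -ξ) + -(t * ξ) by ring, AddChar.map_add_eq_mul,
      Circle.coe_mul, Circle.smul_def, smul_eq_mul, sub_sub_cancel]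
    ring
  have hprod : Integrable (Function.uncurry fun s t : ℝ ↦
      (Real.fourierChar (-(s * ξ)) : ℂ) * (φ (t - s) : ℂ)) (volume.prod μ) := by
    have hcont : Continuous fun p : ℝ × ℝ ↦ (Real.fourierChar (-(p.1 * ξ)) : ℂ) := by
      have := Real.continuous_fourierChar
      fun_prop
    refine (integrable_kernel_prod hφ μ hint).ofReal.bdd_mul (c := 1)
      hcont.aestronglyMeasurable (.of_forall fun p ↦ ?_)
    exact (Circle.norm_coe _).le
  rw [Real.fourier_real_eq, hchar, ← integral_const_mul]
  simp only [← hchange]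
  rw [← integral_integral_swap hprod]
  refine integral_congr_ae (.of_forall fun s ↦ ?_)
  simp only [potential, Circle.smul_def, smul_eq_mul, integral_const_mul, integral_complex_ofReal]

end

/-- The potential of the signed measure `μ - ν`, written as a difference of potentials so that only
positive measures are integrated against. -/
noncomputable def potentialDiff (φ : ℝ → ℝ) (μ ν : Measure ℝ) (s : ℝ) : ℝ :=
  potential φ μ s - potential φ ν s

include hφ in
theorem measurable_potentialDiff : Measurable (potentialDiff φ μ ν) :=
  (measurable_potential hφ μ).sub (measurable_potential hφ ν)

include hφ in
theorem energy_potentialDiff (hint : Integrable φ) (hL2 : MemLp φ 2) :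
    energy (potentialDiff φ μ ν) = ∫⁻ ξ, ‖𝓕 (fun u ↦ (φ u : ℂ)) (-ξ)‖ₑ ^ 2 *
      ‖charFun μ (-(2 * Real.pi * ξ)) - charFun ν (-(2 * Real.pi * ξ))‖ₑ ^ 2 := by
  have hμ := integrable_potential hφ μ hint
  have hν := integrable_potential hφ ν hint
  rw [energy_eq_lintegral_fourier (f := potentialDiff φ μ ν) (hμ.sub hν)
    ((memLp_potential hφ μ hL2).sub (memLp_potential hφ ν hL2))]
  congr with ξ
  rw [← mul_pow, ← enorm_mul, mul_sub, ← fourier_potential hφ μ hint, ← fourier_potential hφ ν hint]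
  simp only [Real.fourier_real_eq, potentialDiff, Complex.ofReal_sub, smul_sub]
  have hconv {f : ℝ → ℝ} (hf : Integrable f) :
      Integrable fun v ↦ Real.fourierChar (-(v * ξ)) • (f v : ℂ) := by
    simpa only [RCLike.inner_apply, conj_trivial, mul_comm ξ] using
      (Real.fourierIntegral_convergent_iff (f := fun v ↦ (f v : ℂ)) ξ).2 hf.ofReal
  rw [integral_sub (hconv hμ) (hconv hν)]

theorem energy_potentialDiff_le_tsum {ι : Type*} [Countable ι] {ψ : ι → ℝ → ℝ} {c : ι → ℝ}
    (hφ : Measurable φ) (hφ1 : Integrable φ) (hφ2 : MemLp φ 2) (hψ : ∀ j, Measurable (ψ j))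
    (hψ1 : ∀ j, Integrable (ψ j)) (hψ2 : ∀ j, MemLp (ψ j) 2) (hc : ∀ j, 0 ≤ c j)
    (hdom : ∀ ξ, ∃ j, ‖𝓕 (fun u ↦ (φ u : ℂ)) ξ‖ ^ 2 ≤ c j * ‖𝓕 (fun u ↦ (ψ j u : ℂ)) ξ‖ ^ 2) :
    energy (potentialDiff φ μ ν) ≤
      ∑' j, ENNReal.ofReal (c j) * energy (potentialDiff (ψ j) μ ν) := by
  have hchar (η : Measure ℝ) [IsFiniteMeasure η] :
      Measurable fun ξ : ℝ ↦ charFun η (-(2 * Real.pi * ξ)) :=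
    measurable_charFun.comp (measurable_id.const_mul _).neg
  have hmeas (j : ι) : Measurable fun ξ : ℝ ↦ ‖𝓕 (fun u ↦ (ψ j u : ℂ)) (-ξ)‖ₑ ^ 2 *
      ‖charFun μ (-(2 * Real.pi * ξ)) - charFun ν (-(2 * Real.pi * ξ))‖ₑ ^ 2 := by
    have hcont : Continuous (𝓕 fun u ↦ (ψ j u : ℂ)) :=
      VectorFourier.fourierIntegral_continuous Real.continuous_fourierChar continuous_inner
        (hψ1 j).ofReal
    exact ((hcont.comp continuous_neg).measurable.enorm.pow_const 2).mul
      (((hchar μ).sub (hchar ν)).enorm.pow_const 2)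
  simp only [energy_potentialDiff hφ μ ν hφ1 hφ2,
    fun j ↦ energy_potentialDiff (hψ j) μ ν (hψ1 j) (hψ2 j), ← lintegral_const_mul _ (hmeas _)]
  rw [← lintegral_tsum fun j ↦ ((hmeas j).const_mul _).aemeasurable]
  refine lintegral_mono fun ξ ↦ ?_
  obtain ⟨j, hj⟩ := hdom (-ξ)
  refine le_trans ?_ (ENNReal.le_tsum j)
  rw [← mul_assoc]
  gcongr
  simpa only [ENNReal.ofReal_mul (hc j), ENNReal.ofReal_pow (norm_nonneg _), ofReal_norm]
    using ENNReal.ofReal_le_ofReal hj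

end Potential

section EnergyCalculus

theorem energy_comp_add_right (f : ℝ → ℝ) (c : ℝ) : energy (fun s ↦ f (s + c)) = energy f :=
  lintegral_add_right_eq_self (fun s ↦ ENNReal.ofReal (f s ^ 2)) c

theorem energy_comp_sub_right (f : ℝ → ℝ) (c : ℝ) : energy (fun s ↦ f (s - c)) = energy f :=
  lintegral_sub_right_eq_self (fun s ↦ ENNReal.ofReal (f s ^ 2)) c

theorem energy_le_add_of_sq_le {f g h : ℝ → ℝ} {a b : ℝ} (ha : 0 ≤ a) (hb : 0 ≤ b)
    (hg : Measurable g) (hh : Measurable h) (hle : ∀ s, f s ^ 2 ≤ a * g s ^ 2 + b * h s ^ 2) :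
    energy f ≤ ENNReal.ofReal a * energy g + ENNReal.ofReal b * energy h := by
  have hgm : Measurable fun s ↦ ENNReal.ofReal (g s ^ 2) := (hg.pow_const 2).ennreal_ofReal
  have hhm : Measurable fun s ↦ ENNReal.ofReal (h s ^ 2) := (hh.pow_const 2).ennreal_ofReal
  simp only [energy]
  rw [← lintegral_const_mul _ hgm, ← lintegral_const_mul _ hhm,
    ← lintegral_add_left (hgm.const_mul _)]
  refine lintegral_mono fun s ↦ ?_
  rw [← ENNReal.ofReal_mul ha, ← ENNReal.ofReal_mul hb,
    ← ENNReal.ofReal_add (by positivity) (by positivity)]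
  exact ENNReal.ofReal_le_ofReal (hle s)

end EnergyCalculus

section DistributionFunction

variable (μ ν : Measure ℝ) [IsFiniteMeasure μ] [IsFiniteMeasure ν]

/-- The left-continuous distribution function of the signed measure `μ - ν`. -/
noncomputable def signedCdf (μ ν : Measure ℝ) (s : ℝ) : ℝ := μ.real (Iio s) - ν.real (Iio s)

theorem monotone_measureReal_Iio : Monotone fun s ↦ μ.real (Iio s) :=
  fun _ _ h ↦ measureReal_mono (Iio_subset_Iio h)

theorem measurable_signedCdf : Measurable (signedCdf μ ν) :=
  (monotone_measureReal_Iio μ).measurable.sub (monotone_measureReal_Iio ν).measurable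

theorem measureReal_Ico_add {h : ℝ} (hh : 0 ≤ h) (s : ℝ) :
    μ.real (Ico s (s + h)) = μ.real (Iio (s + h)) - μ.real (Iio s) := by
  have hdisj : Disjoint (Iio s) (Ico s (s + h)) := disjoint_left.2 fun _ hlt hmem ↦
    hlt.not_ge hmem.1
  rw [← Iio_union_Ico_eq_Iio (b := s + h) (by linarith : s ≤ s + h),
    measureReal_union hdisj measurableSet_Ico, add_sub_cancel_left]

theorem potential_box {h : ℝ} (hh : 0 ≤ h) (s : ℝ) :
    potential (box h) μ s = μ.real (Iio (s + h)) - μ.real (Iio s) := by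
  have hbox : (fun t ↦ box h (t - s)) = (Ico s (s + h)).indicator 1 := by
    ext t
    simp only [box, indicator_apply, mem_Ico, sub_nonneg, sub_lt_iff_lt_add']
    rfl
  rw [potential, hbox, integral_indicator_one measurableSet_Ico, measureReal_Ico_add μ hh]

theorem potentialDiff_box {h : ℝ} (hh : 0 ≤ h) :
    potentialDiff (box h) μ ν = fun s ↦ signedCdf μ ν (s + h) - signedCdf μ ν s := by
  ext s
  rw [potentialDiff, potential_box μ hh, potential_box ν hh, signedCdf, signedCdf]
  ring

theorem energy_box {h : ℝ} : energy (box h) = ENNReal.ofReal h := by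
  have (s : ℝ) : ENNReal.ofReal (box h s ^ 2) = (Ico 0 h).indicator 1 s := by
    by_cases hs : s ∈ Ico 0 h <;> simp [box, hs]
  simp only [energy, this]
  rw [lintegral_indicator_one measurableSet_Ico, Real.volume_Ico, sub_zero]

/-- An increment of a distribution function over a window of width `2h` around `s` is dominated by
the potential of a box, so its energy is controlled by `energy_potential_le`. -/
theorem energy_signedCdf_sub_le (hμ : μ univ ≤ 1) (hν : ν univ ≤ 1) {h : ℝ} {a b : ℝ → ℝ}
    (ha : ∀ s, s - h ≤ a s) (hab : ∀ s, a s ≤ b s) (hb : ∀ s, b s ≤ s + h) :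
    energy (fun s ↦ signedCdf μ ν (b s) - signedCdf μ ν (a s)) ≤ ENNReal.ofReal (4 * h) := by
  have hh : 0 ≤ h := by linarith [ha 0, hab 0, hb 0]
  have hincr (η : Measure ℝ) [IsFiniteMeasure η] (s : ℝ) :
      0 ≤ η.real (Iio (b s)) - η.real (Iio (a s)) ∧
        η.real (Iio (b s)) - η.real (Iio (a s)) ≤ potential (box (2 * h)) η (s - h) := by
    rw [potential_box η (by positivity), show s - h + 2 * h = s + h by ring]
    have hmono := monotone_measureReal_Iio η
    exact ⟨sub_nonneg.2 (hmono (hab s)), sub_le_sub (hmono (hb s)) (hmono (ha s))⟩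
  have hpot (η : Measure ℝ) [IsFiniteMeasure η] (hη : η univ ≤ 1) :
      energy (fun s ↦ potential (box (2 * h)) η (s - h)) ≤ ENNReal.ofReal (2 * h) := by
    rw [energy_comp_sub_right, ← energy_box]
    exact (energy_potential_le (measurable_box _) η).trans
      (mul_le_of_le_one_left' (pow_le_one' hη 2))
  have hmeas (η : Measure ℝ) [IsFiniteMeasure η] :
      Measurable fun s ↦ potential (box (2 * h)) η (s - h) :=
    (measurable_potential (measurable_box _) η).comp (measurable_id.sub_const h)
  calc energy (fun s ↦ signedCdf μ ν (b s) - signedCdf μ ν (a s))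
      ≤ ENNReal.ofReal 1 * energy (fun s ↦ potential (box (2 * h)) μ (s - h)) +
          ENNReal.ofReal 1 * energy (fun s ↦ potential (box (2 * h)) ν (s - h)) := by
        refine energy_le_add_of_sq_le zero_le_one zero_le_one (hmeas μ) (hmeas ν) fun s ↦ ?_
        obtain ⟨hμ0, hμle⟩ := hincr μ s
        obtain ⟨hν0, hνle⟩ := hincr ν s
        simp only [signedCdf]
        nlinarith [mul_nonneg hμ0 hν0]
    _ ≤ ENNReal.ofReal (2 * h) + ENNReal.ofReal (2 * h) := by
        simp only [ENNReal.ofReal_one, one_mul]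
        exact add_le_add (hpot μ hμ) (hpot ν hν)
    _ = ENNReal.ofReal (4 * h) := by
        rw [← ENNReal.ofReal_add (by positivity) (by positivity)]
        ring_nf

end DistributionFunction

section DyadicGrid

/-- The mesh of the `j`-th dyadic grid. -/
noncomputable def gridStep (j : ℕ) : ℝ := 2⁻¹ ^ j

/-- The largest point of the `j`-th dyadic grid not exceeding `s`. -/
noncomputable def gridFloor (j : ℕ) (s : ℝ) : ℝ := ⌊s / gridStep j⌋ * gridStep j

theorem gridStep_pos (j : ℕ) : 0 < gridStep j := by unfold gridStep; positivity

theorem gridStep_mul_two_pow (j : ℕ) : gridStep j * 2 ^ j = 1 := by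
  rw [gridStep, ← mul_pow, inv_mul_cancel₀ two_ne_zero, one_pow]

theorem gridStep_eq_two_mul (j : ℕ) : gridStep j = 2 * gridStep (j + 1) := by
  unfold gridStep
  rw [pow_succ]
  ring

theorem measurable_gridFloor (j : ℕ) : Measurable (gridFloor j) :=
  (measurable_from_top.comp (measurable_id.div_const _).floor).mul_const _

theorem gridFloor_le (j : ℕ) (s : ℝ) : gridFloor j s ≤ s :=
  sub_nonneg.1 (Int.sub_floor_div_mul_nonneg s (gridStep_pos j))

theorem lt_gridFloor_add_gridStep (j : ℕ) (s : ℝ) : s < gridFloor j s + gridStep j :=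
  sub_lt_iff_lt_add'.1 (Int.sub_floor_div_mul_lt s (gridStep_pos j))

theorem gridFloor_eq_iff {j : ℕ} {s : ℝ} {k : ℤ} :
    gridFloor j s = k * gridStep j ↔ k * gridStep j ≤ s ∧ s < k * gridStep j + gridStep j := by
  rw [gridFloor, mul_left_inj' (gridStep_pos j).ne', Int.cast_inj, Int.floor_eq_iff,
    le_div_iff₀ (gridStep_pos j), div_lt_iff₀ (gridStep_pos j), add_one_mul]

theorem gridFloor_add_gridStep (j : ℕ) (s : ℝ) :
    gridFloor j (s + gridStep j) = gridFloor j s + gridStep j := by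
  rw [gridFloor, add_div, div_self (gridStep_pos j).ne', Int.floor_add_one, gridFloor]
  push_cast
  ring

theorem gridFloor_succ (j : ℕ) (s : ℝ) : gridFloor (j + 1) s = gridFloor j s ∨
    gridFloor (j + 1) s = gridFloor j s + gridStep (j + 1) ∧
      gridFloor (j + 1) (s - gridStep (j + 1)) = gridFloor j s := by
  set k := ⌊s / gridStep j⌋
  have hk : gridFloor j s = (2 * k : ℤ) * gridStep (j + 1) := by
    change k * gridStep j = _
    rw [gridStep_eq_two_mul]
    push_cast
    ring
  have hle := gridFloor_le j s
  have hlt := lt_gridFloor_add_gridStep j s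
  rw [gridStep_eq_two_mul j] at hlt
  rcases lt_or_ge s (gridFloor j s + gridStep (j + 1)) with h | h
  · left
    rw [hk] at hle h ⊢
    exact gridFloor_eq_iff.2 ⟨hle, h⟩
  · right
    have hright : gridFloor j s + gridStep (j + 1) = (2 * k + 1 : ℤ) * gridStep (j + 1) := by
      rw [hk]
      push_cast
      ring
    refine ⟨?_, ?_⟩
    · rw [hright]
      exact gridFloor_eq_iff.2 (by rw [← hright]; constructor <;> linarith)
    · rw [hk]
      exact gridFloor_eq_iff.2 (by rw [← hk]; constructor <;> linarith)

end DyadicGrid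

section IncrementEnergies

variable (G : ℝ → ℝ)

/-- The energy of the increments of `G` over sliding windows of length `gridStep j`. -/
noncomputable def slidingEnergy (j : ℕ) : ℝ≥0∞ := energy fun s ↦ G (s + gridStep j) - G s

/-- The energy of the increments of `G` over the cells of the `j`-th dyadic grid. -/
noncomputable def cellEnergy (j : ℕ) : ℝ≥0∞ :=
  energy fun s ↦ G (gridFloor j s + gridStep j) - G (gridFloor j s)

/-- The energy of the increments of `G` from the `j`-th dyadic grid. -/
noncomputable def offsetEnergy (j : ℕ) : ℝ≥0∞ := energy fun s ↦ G s - G (gridFloor j s)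

variable {G} (hG : Measurable G)
include hG

theorem measurable_offset (j : ℕ) : Measurable fun s ↦ G s - G (gridFloor j s) :=
  hG.sub (hG.comp (measurable_gridFloor j))

theorem measurable_cellIncrement (j : ℕ) :
    Measurable fun s ↦ G (gridFloor j s + gridStep j) - G (gridFloor j s) :=
  (hG.comp ((measurable_gridFloor j).add_const _)).sub (hG.comp (measurable_gridFloor j))

/-- The increment over `[s, s + h)` is the increment over the cell of `s`, minus the offset of `s`,
plus the offset of `s + h`. -/
theorem slidingEnergy_le (j : ℕ) :
    slidingEnergy G j ≤ 3 * cellEnergy G j + 6 * offsetEnergy G j := by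
  set offset := fun s ↦ G s - G (gridFloor j s)
  have hoffset : Measurable offset := measurable_offset hG j
  have hshift : Measurable fun s ↦ offset (s + gridStep j) :=
    hoffset.comp (measurable_id.add_const _)
  have hdiff : energy (fun s ↦ offset (s + gridStep j) - offset s) ≤ 4 * offsetEnergy G j := by
    have h := energy_le_add_of_sq_le zero_le_two zero_le_two hshift hoffset
      (f := fun s ↦ offset (s + gridStep j) - offset s)
      fun s ↦ by nlinarith [sq_nonneg (offset (s + gridStep j) + offset s)]
    rw [energy_comp_add_right, ← add_mul, ← ENNReal.ofReal_add zero_le_two zero_le_two] at h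
    norm_num at h
    exact h
  have hsplit := energy_le_add_of_sq_le (a := 3) (b := 3 / 2) (by norm_num) (by norm_num)
    (measurable_cellIncrement hG j) (hshift.sub hoffset) (f := fun s ↦ G (s + gridStep j) - G s)
    fun s ↦ by
      simp only [offset, gridFloor_add_gridStep, Pi.sub_apply]
      nlinarith [sq_nonneg (2 * (G (gridFloor j s + gridStep j) - G (gridFloor j s)) -
        ((G (s + gridStep j) - G (gridFloor j s + gridStep j)) - (G s - G (gridFloor j s))))]
  calc slidingEnergy G j
      ≤ ENNReal.ofReal 3 * cellEnergy G j + ENNReal.ofReal (3 / 2) * (4 * offsetEnergy G j) :=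
        hsplit.trans (add_le_add_right (mul_le_mul_right hdiff _) _)
    _ = 3 * cellEnergy G j + 6 * offsetEnergy G j := by
        rw [← mul_assoc, show (4 : ℝ≥0∞) = ENNReal.ofReal 4 by simp,
          ← ENNReal.ofReal_mul (by norm_num)]
        norm_num

theorem offsetEnergy_le (j : ℕ) : offsetEnergy G j ≤
    ENNReal.ofReal (3 / 2) * offsetEnergy G (j + 1) + 3 * cellEnergy G (j + 1) := by
  set cellIncr := fun s ↦ G (gridFloor (j + 1) s + gridStep (j + 1)) - G (gridFloor (j + 1) s)
  have hcellIncr : Measurable fun s ↦ cellIncr (s - gridStep (j + 1)) :=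
    (measurable_cellIncrement hG (j + 1)).comp (measurable_id.sub_const _)
  calc offsetEnergy G j
      ≤ ENNReal.ofReal (3 / 2) * offsetEnergy G (j + 1) +
          ENNReal.ofReal 3 * energy (fun s ↦ cellIncr (s - gridStep (j + 1))) := by
        refine energy_le_add_of_sq_le (by norm_num) (by norm_num) (measurable_offset hG (j + 1))
          hcellIncr fun s ↦ ?_
        set offset := G s - G (gridFloor (j + 1) s) with hoffset
        simp only [cellIncr]
        rcases gridFloor_succ j s with hleft | ⟨hright, hcell⟩
        · rw [← hleft, ← hoffset]
          nlinarith [sq_nonneg offset]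
        · rw [hcell, ← hright]
          nlinarith [sq_nonneg (2 * (G (gridFloor (j + 1) s) - G (gridFloor j s)) - offset)]
    _ = ENNReal.ofReal (3 / 2) * offsetEnergy G (j + 1) + 3 * cellEnergy G (j + 1) := by
        rw [energy_comp_sub_right, ENNReal.ofReal_ofNat, cellEnergy]

end IncrementEnergies

section CrudeBounds

variable {μ ν : Measure ℝ} [IsFiniteMeasure μ] [IsFiniteMeasure ν] (hμ : μ univ ≤ 1)
  (hν : ν univ ≤ 1) (j : ℕ)
include hμ hν

theorem slidingEnergy_signedCdf_le :
    slidingEnergy (signedCdf μ ν) j ≤ ENNReal.ofReal (4 * gridStep j) :=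
  have hpos := gridStep_pos j
  energy_signedCdf_sub_le μ ν hμ hν (fun s ↦ by linarith) (fun s ↦ by linarith) fun _ ↦ le_rfl

theorem offsetEnergy_signedCdf_le :
    offsetEnergy (signedCdf μ ν) j ≤ ENNReal.ofReal (4 * gridStep j) :=
  energy_signedCdf_sub_le μ ν hμ hν (fun s ↦ by linarith [lt_gridFloor_add_gridStep j s])
    (gridFloor_le j) fun s ↦ by linarith [gridStep_pos j]

end CrudeBounds

section ScaleSummation

/-- The weight of the increments at scale `2⁻ʲ` in the energy of a critical potential. -/
noncomputable def energyWeight (j : ℕ) : ℝ≥0∞ := ENNReal.ofReal (scaleWeight j * 2 ^ j)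

theorem scaleWeight_nonneg (j : ℕ) : 0 ≤ scaleWeight j := by unfold scaleWeight; positivity

theorem energyWeight_le_succ (j : ℕ) : 33 * energyWeight j ≤ 20 * energyWeight (j + 1) := by
  have hw : 33 * scaleWeight j ≤ 40 * scaleWeight (j + 1) := by
    unfold scaleWeight
    push_cast
    rw [inv_pow, inv_pow, ← div_eq_mul_inv, ← div_eq_mul_inv,
      div_le_div_iff₀ (by positivity) (by positivity)]
    nlinarith [(Nat.cast_nonneg j : (0 : ℝ) ≤ j)]
  rw [energyWeight, energyWeight, ← ENNReal.ofReal_ofNat 33, ← ENNReal.ofReal_ofNat 20,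
    ← ENNReal.ofReal_mul (by norm_num), ← ENNReal.ofReal_mul (by norm_num)]
  refine ENNReal.ofReal_le_ofReal ?_
  calc 33 * (scaleWeight j * 2 ^ j) = 33 * scaleWeight j * 2 ^ j := by ring
    _ ≤ 40 * scaleWeight (j + 1) * 2 ^ j := by gcongr
    _ = 20 * (scaleWeight (j + 1) * 2 ^ (j + 1)) := by ring

theorem energyWeight_mul_gridStep (j : ℕ) :
    energyWeight j * ENNReal.ofReal (4 * gridStep j) = ENNReal.ofReal (4 * scaleWeight j) := by
  have h := gridStep_mul_two_pow j
  have hw := scaleWeight_nonneg j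
  rw [energyWeight, ← ENNReal.ofReal_mul (by positivity)]
  congr 1
  linear_combination 4 * scaleWeight j * h

theorem tsum_scaleWeight_le (D : ℕ) :
    ∑' j, ENNReal.ofReal (scaleWeight (j + D)) ≤ ENNReal.ofReal ((D : ℝ) + 9)⁻¹ := by
  have htele (j : ℕ) : scaleWeight (j + D) ≤
      ((j : ℝ) + D + 9)⁻¹ - (((j + 1 : ℕ) : ℝ) + D + 9)⁻¹ := by
    have : 0 ≤ (j : ℝ) + D := by positivity
    rw [scaleWeight, inv_sub_inv (by positivity) (by positivity), inv_pow, ← one_div,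
      div_le_div_iff₀ (by positivity) (by positivity)]
    push_cast
    nlinarith
  refine ENNReal.tsum_le_of_sum_range_le fun m ↦ ?_
  rw [← ENNReal.ofReal_sum_of_nonneg fun i _ ↦ scaleWeight_nonneg _]
  refine ENNReal.ofReal_le_ofReal ((Finset.sum_le_sum fun j _ ↦ htele j).trans ?_)
  rw [Finset.sum_range_sub' fun j : ℕ ↦ ((j : ℝ) + D + 9)⁻¹, Nat.cast_zero, zero_add]
  exact sub_le_self _ (by positivity)

theorem sum_range_le_of_backward_recursion {a b : ℕ → ℝ≥0∞}
    (h : ∀ j, 11 * a j ≤ 10 * a (j + 1) + 20 * b (j + 1)) (D : ℕ) :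
    ∑ j ∈ Finset.range D, a j ≤ 10 * a D + 20 * ∑ j ∈ Finset.range (D + 1), b j := by
  induction D with
  | zero => simp
  | succ D ih =>
    calc ∑ j ∈ Finset.range (D + 1), a j
        ≤ 10 * a D + 20 * ∑ j ∈ Finset.range (D + 1), b j + a D := by
          rw [Finset.sum_range_succ]
          gcongr
      _ = 11 * a D + 20 * ∑ j ∈ Finset.range (D + 1), b j := by ring
      _ ≤ 10 * a (D + 1) + 20 * b (D + 1) + 20 * ∑ j ∈ Finset.range (D + 1), b j := by
          gcongr
          exact h D
      _ = 10 * a (D + 1) + 20 * ∑ j ∈ Finset.range (D + 1 + 1), b j := by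
          rw [Finset.sum_range_succ _ (D + 1)]
          ring

theorem sum_energyWeight_mul_offsetEnergy_le {G : ℝ → ℝ} (hG : Measurable G) (D : ℕ) :
    ∑ j ∈ Finset.range D, energyWeight j * offsetEnergy G j ≤
      10 * (energyWeight D * offsetEnergy G D) +
        20 * ∑ j ∈ Finset.range (D + 1), energyWeight j * cellEnergy G j := by
  refine sum_range_le_of_backward_recursion (fun j ↦ ?_) D
  have hthree : 11 * ENNReal.ofReal (3 / 2) = 33 * 2⁻¹ := by
    rw [ENNReal.ofReal_div_of_pos two_pos, ENNReal.ofReal_ofNat, ENNReal.ofReal_ofNat,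
      div_eq_mul_inv, ← mul_assoc]
    norm_num
  have hten : (10 : ℝ≥0∞) = 20 * 2⁻¹ := by
    rw [show (20 : ℝ≥0∞) = 10 * 2 by norm_num, mul_assoc,
      ENNReal.mul_inv_cancel two_ne_zero ENNReal.ofNat_ne_top, mul_one]
  calc 11 * (energyWeight j * offsetEnergy G j)
      ≤ 11 * (energyWeight j * (ENNReal.ofReal (3 / 2) * offsetEnergy G (j + 1) +
          3 * cellEnergy G (j + 1))) := by gcongr; exact offsetEnergy_le hG j
    _ = 11 * ENNReal.ofReal (3 / 2) * energyWeight j * offsetEnergy G (j + 1) +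
          33 * energyWeight j * cellEnergy G (j + 1) := by ring
    _ = 33 * energyWeight j * (2⁻¹ * offsetEnergy G (j + 1) + cellEnergy G (j + 1)) := by
        rw [hthree]
        ring
    _ ≤ 20 * energyWeight (j + 1) * (2⁻¹ * offsetEnergy G (j + 1) + cellEnergy G (j + 1)) := by
        gcongr ?_ * _
        exact energyWeight_le_succ j
    _ = _ := by
        rw [hten]
        ring

variable {μ ν : Measure ℝ} [IsFiniteMeasure μ] [IsFiniteMeasure ν]

theorem energy_potentialDiff_criticalKernel_le_tsum :
    energy (potentialDiff criticalKernel μ ν) ≤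
      ∑' j, 6000 * (energyWeight j * slidingEnergy (signedCdf μ ν) j) := by
  have hw (j : ℕ) : 0 ≤ scaleWeight j * 2 ^ j := mul_nonneg (scaleWeight_nonneg j) (by positivity)
  have h := energy_potentialDiff_le_tsum μ ν measurable_criticalKernel integrable_criticalKernel
    memLp_criticalKernel (fun j ↦ measurable_box (gridStep j)) (fun j ↦ integrable_box _)
    (fun j ↦ memLp_box _) (fun j ↦ mul_nonneg (by norm_num) (hw j))
    exists_norm_fourier_criticalKernel_sq_le
  simp only [potentialDiff_box μ ν (gridStep_pos _).le, ENNReal.ofReal_ofNat,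
    ENNReal.ofReal_mul (p := 6000) (by norm_num), mul_assoc (6000 : ℝ≥0∞)] at h
  exact h

theorem truncation_error_le (D : ℕ) : 1440000 * ENNReal.ofReal (scaleWeight D) +
    24000 * ENNReal.ofReal ((D : ℝ) + 9)⁻¹ ≤ ENNReal.ofReal (200000 / ((D : ℝ) + 1)) := by
  have : (0 : ℝ) ≤ D := D.cast_nonneg
  have hweight : scaleWeight D ≤ (10 * ((D : ℝ) + 1))⁻¹ := by
    rw [scaleWeight, inv_pow]
    gcongr
    nlinarith
  have hinv : ((D : ℝ) + 9)⁻¹ ≤ ((D : ℝ) + 1)⁻¹ := by gcongr; norm_num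
  have hw := scaleWeight_nonneg D
  rw [← ENNReal.ofReal_ofNat 1440000, ← ENNReal.ofReal_ofNat 24000,
    ← ENNReal.ofReal_mul (by norm_num), ← ENNReal.ofReal_mul (by norm_num),
    ← ENNReal.ofReal_add (by positivity) (by positivity)]
  refine ENNReal.ofReal_le_ofReal ?_
  rw [mul_inv] at hweight
  rw [div_eq_mul_inv]
  nlinarith [inv_pos.2 (by linarith : (0 : ℝ) < (D : ℝ) + 1)]

theorem sum_energyWeight_mul_slidingEnergy_le {G : ℝ → ℝ} (hG : Measurable G) (D : ℕ) :
    ∑ j ∈ Finset.range D, energyWeight j * slidingEnergy G j ≤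
      123 * ∑ j ∈ Finset.range (D + 1), energyWeight j * cellEnergy G j +
        60 * (energyWeight D * offsetEnergy G D) := by
  set E := ∑ j ∈ Finset.range (D + 1), energyWeight j * cellEnergy G j
  calc ∑ j ∈ Finset.range D, energyWeight j * slidingEnergy G j
      ≤ ∑ j ∈ Finset.range D,
          (3 * (energyWeight j * cellEnergy G j) + 6 * (energyWeight j * offsetEnergy G j)) := by
        refine Finset.sum_le_sum fun j _ ↦ ?_
        calc _ ≤ energyWeight j * (3 * cellEnergy G j + 6 * offsetEnergy G j) := by
              gcongr
              exact slidingEnergy_le hG j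
          _ = _ := by ring
    _ ≤ 3 * E + 6 * (10 * (energyWeight D * offsetEnergy G D) + 20 * E) := by
        rw [Finset.sum_add_distrib, ← Finset.mul_sum, ← Finset.mul_sum]
        have hmono : ∑ j ∈ Finset.range D, energyWeight j * cellEnergy G j ≤ E :=
          Finset.sum_le_sum_of_subset (Finset.range_mono D.le_succ)
        have hoffset := sum_energyWeight_mul_offsetEnergy_le hG D
        gcongr
    _ = 123 * E + 60 * (energyWeight D * offsetEnergy G D) := by ring

/-- Truncation at generation `D`: below it the sliding increments are controlled by the cell
increments, above it the energies are small because the total masses are bounded. -/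
theorem energy_potentialDiff_criticalKernel_le (hμ : μ univ ≤ 1) (hν : ν univ ≤ 1) (D : ℕ) :
    energy (potentialDiff criticalKernel μ ν) ≤
      738000 * ∑ j ∈ Finset.range (D + 1), energyWeight j * cellEnergy (signedCdf μ ν) j +
        ENNReal.ofReal (200000 / ((D : ℝ) + 1)) := by
  have hG := measurable_signedCdf μ ν
  set G := signedCdf μ ν
  set E := ∑ j ∈ Finset.range (D + 1), energyWeight j * cellEnergy G j
  have hsmall {S : ℝ≥0∞} {j : ℕ} (hS : S ≤ ENNReal.ofReal (4 * gridStep j)) :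
      energyWeight j * S ≤ 4 * ENNReal.ofReal (scaleWeight j) := by
    rw [← ENNReal.ofReal_ofNat, ← ENNReal.ofReal_mul (by norm_num), ← energyWeight_mul_gridStep]
    gcongr
  have hhead : ∑ j ∈ Finset.range D, energyWeight j * slidingEnergy G j ≤
      123 * E + 60 * (4 * ENNReal.ofReal (scaleWeight D)) :=
    (sum_energyWeight_mul_slidingEnergy_le hG D).trans
      (by gcongr _ + 60 * ?_; exact hsmall (offsetEnergy_signedCdf_le hμ hν D))
  have htail : ∑' j, energyWeight (j + D) * slidingEnergy G (j + D) ≤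
      4 * ENNReal.ofReal ((D : ℝ) + 9)⁻¹ := by
    refine (ENNReal.tsum_le_tsum fun j ↦ hsmall (slidingEnergy_signedCdf_le hμ hν (j + D))).trans ?_
    rw [ENNReal.tsum_mul_left]
    gcongr
    exact tsum_scaleWeight_le D
  calc energy (potentialDiff criticalKernel μ ν)
      ≤ 6000 * ∑' j, energyWeight j * slidingEnergy G j := by
        rw [← ENNReal.tsum_mul_left]
        exact energy_potentialDiff_criticalKernel_le_tsum
    _ ≤ 6000 * (123 * E + 60 * (4 * ENNReal.ofReal (scaleWeight D)) +
          4 * ENNReal.ofReal ((D : ℝ) + 9)⁻¹) := by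
        rw [← ENNReal.summable.sum_add_tsum_nat_add' (k := D)]
        gcongr
    _ = 738000 * E + (1440000 * ENNReal.ofReal (scaleWeight D) +
          24000 * ENNReal.ofReal ((D : ℝ) + 9)⁻¹) := by ring
    _ ≤ 738000 * E + ENNReal.ofReal (200000 / ((D : ℝ) + 1)) := by
        gcongr
        exact truncation_error_le D

end ScaleSummation

section DyadicMass

/-- The `k`-th cell of the `j`-th dyadic grid. -/
def dyadicCell (j : ℕ) (k : ℤ) : Set ℝ := Ico (k * gridStep j) (k * gridStep j + gridStep j)

/-- The mass which `μ` gives to a dyadic cell. -/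
noncomputable def cellMass (μ : Measure ℝ) (j : ℕ) (k : ℤ) : ℝ := μ.real (dyadicCell j k)

/-- A nonnegative, finitely additive set function on the dyadic cells. -/
structure IsDyadicMass (x : ℕ → ℤ → ℝ) : Prop where
  nonneg : ∀ j k, 0 ≤ x j k
  add : ∀ j k, x j k = x (j + 1) (2 * k) + x (j + 1) (2 * k + 1)

/-- The energy `∑ w z²` of a function `z` on dyadic cells, with weight `w = scaleWeight i` at
generation `i`, summed over the cell `(j, k)` and its descendants in `d` generations. -/
noncomputable def dyadicEnergy (z : ℕ → ℤ → ℝ) : ℕ → ℕ → ℤ → ℝ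
  | 0, _, _ => 0
  | d + 1, j, k => scaleWeight j * z j k ^ 2 +
      (dyadicEnergy z d (j + 1) (2 * k) + dyadicEnergy z d (j + 1) (2 * k + 1))

theorem measurableSet_dyadicCell (j : ℕ) (k : ℤ) : MeasurableSet (dyadicCell j k) :=
  measurableSet_Ico

theorem gridFloor_of_mem_dyadicCell {j : ℕ} {k : ℤ} {s : ℝ} (hs : s ∈ dyadicCell j k) :
    gridFloor j s = k * gridStep j :=
  gridFloor_eq_iff.2 hs

theorem volume_dyadicCell (j : ℕ) (k : ℤ) :
    volume (dyadicCell j k) = ENNReal.ofReal (gridStep j) := by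
  rw [dyadicCell, Real.volume_Ico, add_sub_cancel_left]

theorem dyadicCell_two_mul_add_one (j : ℕ) (k : ℤ) : dyadicCell (j + 1) (2 * k + 1) =
    Ico (k * gridStep j + gridStep (j + 1)) (k * gridStep j + gridStep j) := by
  rw [dyadicCell, gridStep_eq_two_mul j]
  push_cast
  ring_nf

theorem dyadicCell_two_mul (j : ℕ) (k : ℤ) : dyadicCell (j + 1) (2 * k) =
    Ico (k * gridStep j) (k * gridStep j + gridStep (j + 1)) := by
  rw [dyadicCell, gridStep_eq_two_mul j]
  push_cast
  ring_nf

theorem dyadicCell_eq_union (j : ℕ) (k : ℤ) :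
    dyadicCell j k = dyadicCell (j + 1) (2 * k) ∪ dyadicCell (j + 1) (2 * k + 1) := by
  have hstep := gridStep_eq_two_mul j
  have hpos := gridStep_pos (j + 1)
  rw [dyadicCell_two_mul, dyadicCell_two_mul_add_one,
    Ico_union_Ico_eq_Ico (by linarith) (by linarith), dyadicCell]

theorem disjoint_dyadicCell (j : ℕ) (k : ℤ) :
    Disjoint (dyadicCell (j + 1) (2 * k)) (dyadicCell (j + 1) (2 * k + 1)) := by
  rw [dyadicCell_two_mul, dyadicCell_two_mul_add_one]
  exact Ico_disjoint_Ico_same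

theorem isDyadicMass_cellMass (μ : Measure ℝ) [IsFiniteMeasure μ] :
    IsDyadicMass (cellMass μ) where
  nonneg _ _ := measureReal_nonneg
  add j k := by
    rw [cellMass, dyadicCell_eq_union,
      measureReal_union (disjoint_dyadicCell j k) (measurableSet_dyadicCell _ _), cellMass,
      cellMass]

theorem dyadicEnergy_nonneg (z : ℕ → ℤ → ℝ) (d j : ℕ) (k : ℤ) : 0 ≤ dyadicEnergy z d j k := by
  induction d generalizing j k with
  | zero => exact le_rfl
  | succ d ih =>
    have hw := scaleWeight_nonneg j
    have hleft := ih (j + 1) (2 * k)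
    have hright := ih (j + 1) (2 * k + 1)
    rw [dyadicEnergy]
    positivity

end DyadicMass

section CellEnergy

/-- The increments of `G` over dyadic cells. -/
noncomputable def cellIncrement (G : ℝ → ℝ) (j : ℕ) (k : ℤ) : ℝ :=
  G (k * gridStep j + gridStep j) - G (k * gridStep j)

theorem cellIncrement_signedCdf (μ ν : Measure ℝ) [IsFiniteMeasure μ] [IsFiniteMeasure ν] :
    cellIncrement (signedCdf μ ν) = fun j k ↦ cellMass μ j k - cellMass ν j k := by
  ext j k
  have h := (gridStep_pos j).le
  simp only [cellMass, dyadicCell, measureReal_Ico_add _ h, cellIncrement, signedCdf]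
  ring

variable (G : ℝ → ℝ)

theorem setLIntegral_dyadicCell_self (j : ℕ) (k : ℤ) :
    energyWeight j * ∫⁻ s in dyadicCell j k,
      ENNReal.ofReal ((G (gridFloor j s + gridStep j) - G (gridFloor j s)) ^ 2) =
        ENNReal.ofReal (scaleWeight j * cellIncrement G j k ^ 2) := by
  have hconst : EqOn (fun s ↦
      ENNReal.ofReal ((G (gridFloor j s + gridStep j) - G (gridFloor j s)) ^ 2))
      (fun _ ↦ ENNReal.ofReal (cellIncrement G j k ^ 2)) (dyadicCell j k) := fun s hs ↦ by
    simp only [gridFloor_of_mem_dyadicCell hs, cellIncrement]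
  have hw := scaleWeight_nonneg j
  rw [setLIntegral_congr_fun (measurableSet_dyadicCell j k) hconst, setLIntegral_const,
    volume_dyadicCell, energyWeight, ← ENNReal.ofReal_mul (by positivity),
    ← ENNReal.ofReal_mul (by positivity)]
  congr 1
  linear_combination scaleWeight j * cellIncrement G j k ^ 2 * gridStep_mul_two_pow j

theorem sum_energyWeight_setLIntegral_dyadicCell (d j : ℕ) (k : ℤ) :
    ∑ i ∈ Finset.range d, energyWeight (j + i) * ∫⁻ s in dyadicCell j k,
      ENNReal.ofReal ((G (gridFloor (j + i) s + gridStep (j + i)) - G (gridFloor (j + i) s)) ^ 2) =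
        ENNReal.ofReal (dyadicEnergy (cellIncrement G) d j k) := by
  induction d generalizing j k with
  | zero => simp [dyadicEnergy]
  | succ d ih =>
    have hw := scaleWeight_nonneg j
    rw [Finset.sum_range_succ', add_zero, setLIntegral_dyadicCell_self, dyadicEnergy,
      ENNReal.ofReal_add (by positivity)
        (add_nonneg (dyadicEnergy_nonneg _ _ _ _) (dyadicEnergy_nonneg _ _ _ _)),
      ENNReal.ofReal_add (dyadicEnergy_nonneg _ _ _ _) (dyadicEnergy_nonneg _ _ _ _),
      ← ih, ← ih, ← Finset.sum_add_distrib, add_comm]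
    congr 1
    refine Finset.sum_congr rfl fun i _ ↦ ?_
    rw [dyadicCell_eq_union, lintegral_union (measurableSet_dyadicCell _ _)
      (disjoint_dyadicCell j k), mul_add, add_right_comm j 1 i, add_assoc]

variable {G}

theorem cellEnergy_eq_setLIntegral (hleft : ∀ s ≤ 0, G s = G 0) (hright : ∀ s, 1 ≤ s → G s = G 1)
    (j : ℕ) : cellEnergy G j = ∫⁻ s in dyadicCell 0 0,
      ENNReal.ofReal ((G (gridFloor j s + gridStep j) - G (gridFloor j s)) ^ 2) := by
  have hpos := gridStep_pos j
  have hcell : dyadicCell 0 0 = Ico 0 1 := by simp [dyadicCell, gridStep]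
  rw [hcell, cellEnergy, energy]
  refine (setLIntegral_eq_of_support_subset fun s hs ↦ ?_).symm
  by_contra hout
  refine hs ?_
  rcases lt_or_ge s 0 with hneg | hnonneg
  · have hfloor : ⌊s / gridStep j⌋ + 1 ≤ 0 := Int.floor_lt.2 (by
      simpa using div_neg_of_neg_of_pos hneg hpos)
    have hend : gridFloor j s + gridStep j ≤ 0 := by
      rw [gridFloor, ← add_one_mul]
      exact mul_nonpos_of_nonpos_of_nonneg (by exact_mod_cast hfloor) hpos.le
    simp [hleft _ hend, hleft _ (by linarith : gridFloor j s ≤ 0)]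
  · have hone : 1 ≤ s := not_lt.1 fun h ↦ hout ⟨hnonneg, h⟩
    have hunit := gridStep_mul_two_pow j
    have hfloor : (2 : ℤ) ^ j ≤ ⌊s / gridStep j⌋ := Int.le_floor.2 (by
      rw [le_div_iff₀ hpos]
      push_cast
      linarith)
    have hstart : 1 ≤ gridFloor j s := by
      rw [← hunit, mul_comm, gridFloor]
      gcongr
      exact_mod_cast hfloor
    simp [hright _ hstart, hright _ (by linarith : 1 ≤ gridFloor j s + gridStep j)]

end CellEnergy

section CriticalPotential

theorem measureReal_Iio_eq_zero_of_le {μ : Measure ℝ} {a b s : ℝ} (hμ : μ (Ico a b)ᶜ = 0)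
    (hs : s ≤ a) : μ.real (Iio s) = 0 := by
  have hsub : Iio s ⊆ (Ico a b)ᶜ := fun t ht hmem ↦ (ht.trans_le hs).not_ge hmem.1
  rw [measureReal_def, measure_mono_null hsub hμ, ENNReal.toReal_zero]

theorem measureReal_Iio_eq_measureReal_univ_of_le {μ : Measure ℝ} {a b s : ℝ}
    (hμ : μ (Ico a b)ᶜ = 0) (hs : b ≤ s) : μ.real (Iio s) = μ.real univ := by
  have hsub : (Iio s)ᶜ ⊆ (Ico a b)ᶜ := compl_subset_compl.2 fun t ht ↦ ht.2.trans_le hs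
  exact measureReal_congr (ae_eq_univ.2 (measure_mono_null hsub hμ))

variable {μ ν : Measure ℝ} [IsFiniteMeasure μ] [IsFiniteMeasure ν]

theorem energy_potentialDiff_criticalKernel_le_dyadicEnergy (hμ : μ univ ≤ 1) (hν : ν univ ≤ 1)
    (hμ01 : μ (Ico 0 1)ᶜ = 0) (hν01 : ν (Ico 0 1)ᶜ = 0) (D : ℕ) :
    energy (potentialDiff criticalKernel μ ν) ≤ ENNReal.ofReal (738000 *
      dyadicEnergy (fun j k ↦ cellMass μ j k - cellMass ν j k) (D + 1) 0 0 +
        200000 / ((D : ℝ) + 1)) := by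
  have hleft : ∀ s ≤ 0, signedCdf μ ν s = signedCdf μ ν 0 := fun s hs ↦ by
    simp only [signedCdf, measureReal_Iio_eq_zero_of_le hμ01 hs,
      measureReal_Iio_eq_zero_of_le hμ01 le_rfl, measureReal_Iio_eq_zero_of_le hν01 hs,
      measureReal_Iio_eq_zero_of_le hν01 le_rfl]
  have hright : ∀ s, 1 ≤ s → signedCdf μ ν s = signedCdf μ ν 1 := fun s hs ↦ by
    simp only [signedCdf, measureReal_Iio_eq_measureReal_univ_of_le hμ01 hs,
      measureReal_Iio_eq_measureReal_univ_of_le hμ01 le_rfl,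
      measureReal_Iio_eq_measureReal_univ_of_le hν01 hs,
      measureReal_Iio_eq_measureReal_univ_of_le hν01 le_rfl]
  have hcells : ∑ j ∈ Finset.range (D + 1), energyWeight j * cellEnergy (signedCdf μ ν) j =
      ENNReal.ofReal
        (dyadicEnergy (fun j k ↦ cellMass μ j k - cellMass ν j k) (D + 1) 0 0) := by
    rw [← cellIncrement_signedCdf, ← sum_energyWeight_setLIntegral_dyadicCell]
    simp only [zero_add, cellEnergy_eq_setLIntegral hleft hright]
  have hbound := energy_potentialDiff_criticalKernel_le hμ hν D
  have hnonneg := dyadicEnergy_nonneg (fun j k ↦ cellMass μ j k - cellMass ν j k) (D + 1) 0 0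
  rw [hcells] at hbound
  rwa [ENNReal.ofReal_add (by positivity) (by positivity), ENNReal.ofReal_mul (by norm_num),
    ENNReal.ofReal_ofNat]

end CriticalPotential

section TreeCounting

variable {α : Type*}

/-- The total cost of the labels of a binary tree. Trees are counted through their Kraft weights
`exp (-treeCost c T)`. -/
noncomputable def treeCost (c : α → ℝ) : BinaryTree α → ℝ
  | .nil => 0
  | .node a l r => c a + (treeCost c l + treeCost c r)

variable {c : α → ℝ}

theorem exp_neg_treeCost_node (c : α → ℝ) (a : α) (l r : BinaryTree α) :
    Real.exp (-treeCost c (.node a l r)) =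
      Real.exp (-c a) * (Real.exp (-treeCost c l) * Real.exp (-treeCost c r)) := by
  rw [treeCost, ← Real.exp_add, ← Real.exp_add]
  ring_nf

theorem sum_exp_neg_treeCost_node (K : Finset α) (L R : Finset (BinaryTree α)) :
    ∑ p ∈ K ×ˢ L ×ˢ R, Real.exp (-treeCost c (.node p.1 p.2.1 p.2.2)) =
      (∑ a ∈ K, Real.exp (-c a)) *
        ((∑ T ∈ L, Real.exp (-treeCost c T)) * ∑ T ∈ R, Real.exp (-treeCost c T)) := by
  simp only [exp_neg_treeCost_node]
  rw [Finset.sum_mul_sum, ← Finset.sum_product', Finset.sum_mul_sum, ← Finset.sum_product']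

theorem height_left_le {d : ℕ} {T : BinaryTree α} (hT : T.height ≤ d + 1) : T.left.height ≤ d := by
  cases T with
  | nil => exact Nat.zero_le _
  | node a l r => exact (le_max_left _ _).trans (Nat.le_of_succ_le_succ hT)

theorem height_right_le {d : ℕ} {T : BinaryTree α} (hT : T.height ≤ d + 1) :
    T.right.height ≤ d := by
  cases T with
  | nil => exact Nat.zero_le _
  | node a l r => exact (le_max_right _ _).trans (Nat.le_of_succ_le_succ hT)

theorem exists_subset_insert_nil_image_node [DecidableEq α] {d : ℕ} {A : Finset (BinaryTree α)}
    (hA : ∀ T ∈ A, T.height ≤ d + 1) :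
    ∃ (K : Finset α) (L R : Finset (BinaryTree α)), (∀ T ∈ L, T.height ≤ d) ∧
      (∀ T ∈ R, T.height ≤ d) ∧
      A ⊆ insert .nil ((K ×ˢ L ×ˢ R).image fun p ↦ .node p.1 p.2.1 p.2.2) := by
  refine ⟨A.biUnion fun | .nil => ∅ | .node a _ _ => {a}, A.image BinaryTree.left,
    A.image BinaryTree.right, Finset.forall_mem_image.2 fun T hT ↦ height_left_le (hA T hT),
    Finset.forall_mem_image.2 fun T hT ↦ height_right_le (hA T hT), fun T hT ↦ ?_⟩
  cases T with
  | nil => exact Finset.mem_insert_self _ _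
  | node a l r =>
    refine Finset.mem_insert_of_mem (Finset.mem_image.2 ⟨(a, l, r), ?_, rfl⟩)
    simp only [Finset.mem_product, Finset.mem_biUnion, Finset.mem_image]
    exact ⟨⟨_, hT, Finset.mem_singleton_self a⟩, ⟨_, hT, rfl⟩, ⟨_, hT, rfl⟩⟩

theorem sum_exp_neg_treeCost_le_of_height_le
    (hc : ∀ K : Finset α, ∑ a ∈ K, Real.exp (-c a) ≤ 1 / 4) (d : ℕ) {A : Finset (BinaryTree α)}
    (hA : ∀ T ∈ A, T.height ≤ d) :
    ∑ T ∈ A, Real.exp (-treeCost c T) ≤ 2 := by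
  classical
  induction d generalizing A with
  | zero =>
    have hsub : A ⊆ {.nil} := fun T hT ↦ by
      cases T with
      | nil => exact Finset.mem_singleton_self _
      | node a l r => exact absurd (hA _ hT) (by simp [BinaryTree.height])
    calc ∑ T ∈ A, Real.exp (-treeCost c T) ≤ ∑ T ∈ {.nil}, Real.exp (-treeCost c T) :=
          Finset.sum_le_sum_of_subset_of_nonneg hsub fun _ _ _ ↦ (Real.exp_pos _).le
      _ ≤ 2 := by simp [treeCost]
  | succ d ih =>
    obtain ⟨K, L, R, hL, hR, hsub⟩ := exists_subset_insert_nil_image_node hA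
    have hinj : Function.Injective
        fun p : α × BinaryTree α × BinaryTree α ↦ BinaryTree.node p.1 p.2.1 p.2.2 := by
      rintro ⟨a, l, r⟩ ⟨a', l', r'⟩ h
      simpa using h
    calc ∑ T ∈ A, Real.exp (-treeCost c T)
        ≤ ∑ T ∈ insert .nil ((K ×ˢ L ×ˢ R).image fun p ↦ .node p.1 p.2.1 p.2.2),
            Real.exp (-treeCost c T) :=
          Finset.sum_le_sum_of_subset_of_nonneg hsub fun _ _ _ ↦ (Real.exp_pos _).le
      _ = 1 + (∑ a ∈ K, Real.exp (-c a)) *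
            ((∑ T ∈ L, Real.exp (-treeCost c T)) * ∑ T ∈ R, Real.exp (-treeCost c T)) := by
          rw [Finset.sum_insert (by simp), Finset.sum_image hinj.injOn, sum_exp_neg_treeCost_node,
            treeCost, neg_zero, Real.exp_zero]
      _ ≤ 1 + 1 / 4 * (2 * 2) := by
          gcongr
          exacts [hc K, ih hL, ih hR]
      _ = 2 := by norm_num

theorem exists_finset_treeCost_le (hc : ∀ K : Finset α, ∑ a ∈ K, Real.exp (-c a) ≤ 1 / 4)
    (b : ℝ) : ∃ S : Finset (BinaryTree α), (S.card : ℝ) ≤ 2 * Real.exp b ∧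
      ∀ T, treeCost c T ≤ b → T ∈ S := by
  have hcard (A : Finset (BinaryTree α)) (hA : ∀ T ∈ A, treeCost c T ≤ b) :
      (A.card : ℝ) ≤ 2 * Real.exp b := by
    have hsum := sum_exp_neg_treeCost_le_of_height_le hc (A.sup BinaryTree.height) (A := A)
      fun T hT ↦ Finset.le_sup hT
    have hlower : A.card * Real.exp (-b) ≤ ∑ T ∈ A, Real.exp (-treeCost c T) := by
      rw [← nsmul_eq_mul]
      exact Finset.card_nsmul_le_sum _ _ _ fun T hT ↦ Real.exp_le_exp.2 (neg_le_neg (hA T hT))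
    rw [Real.exp_neg, ← div_eq_mul_inv] at hlower
    exact (div_le_iff₀ (Real.exp_pos b)).1 (hlower.trans hsum)
  have hfin : {T | treeCost c T ≤ b}.Finite := by
    by_contra hinf
    obtain ⟨m, hm⟩ := exists_nat_gt (2 * Real.exp b)
    obtain ⟨A, hA, rfl⟩ := Set.Infinite.exists_subset_card_eq hinf m
    exact hm.not_ge (hcard A hA)
  exact ⟨hfin.toFinset, hcard _ fun T hT ↦ hfin.mem_toFinset.1 hT,
    fun T hT ↦ hfin.mem_toFinset.2 hT⟩

/-- The cost of a label `m`, which records that an integer part equals `m + 1`. The weights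
`exp (-labelCost m) = 1 / (4 (m + 1) (m + 2))` telescope. -/
noncomputable def labelCost (m : ℕ) : ℝ := Real.log (4 * ((m + 1) * (m + 2)))

theorem sum_exp_neg_labelCost_le (K : Finset ℕ) : ∑ m ∈ K, Real.exp (-labelCost m) ≤ 1 / 4 := by
  have hexp (m : ℕ) : Real.exp (-labelCost m) = 4⁻¹ * (1 / (m + 1) - 1 / ((m + 1 : ℕ) + 1)) := by
    rw [labelCost, Real.exp_neg, Real.exp_log (by positivity)]
    push_cast
    field_simp
    ring
  obtain ⟨N, hN⟩ := K.exists_nat_subset_range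
  calc ∑ m ∈ K, Real.exp (-labelCost m) ≤ ∑ m ∈ Finset.range N, Real.exp (-labelCost m) :=
        Finset.sum_le_sum_of_subset_of_nonneg hN fun _ _ _ ↦ (Real.exp_pos _).le
    _ = 4⁻¹ * (1 - 1 / (N + 1)) := by
        simp only [hexp, ← Finset.mul_sum]
        rw [Finset.sum_range_sub' fun m : ℕ ↦ 1 / ((m : ℝ) + 1)]
        simp
    _ ≤ 1 / 4 := by
        have : 0 ≤ 1 / ((N : ℝ) + 1) := by positivity
        linarith

end TreeCounting

section Fingerprint

/-- The fingerprint of a function on dyadic cells below the cell `(j, k)`, to depth `d`: the values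
at generation `i` are recorded up to integer multiples of `i + 10`, and recording stops at a cell
with integer part zero. The label `m` stands for the integer part `m + 1`. -/
noncomputable def fingerprint (x : ℕ → ℤ → ℝ) : ℕ → ℕ → ℤ → BinaryTree ℕ
  | 0, _, _ => .nil
  | d + 1, j, k => match ⌊x j k / (j + 10)⌋₊ with
    | 0 => .nil
    | m + 1 => .node m (fingerprint x d (j + 1) (2 * k)) (fingerprint x d (j + 1) (2 * k + 1))

/-- The amount granted for the fingerprint below a cell of mass `y` recorded in multiples of `l`.
The concave term pays for the label of the cell itself. -/
noncomputable def cellBudget (l y : ℝ) : ℝ := if l ≤ y then 11 * y - 10 * (√y * √l) else 0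

theorem cellBudget_le {l y : ℝ} (hy : 0 ≤ y) : cellBudget l y ≤ 11 * y := by
  rw [cellBudget]
  split_ifs
  · exact sub_le_self _ (by positivity)
  · positivity

theorem cellBudget_nonneg {l y : ℝ} (hl : 0 ≤ l) : 0 ≤ cellBudget l y := by
  rw [cellBudget]
  split_ifs with h
  · have hy : 0 ≤ y := hl.trans h
    have : √y * √l ≤ y := by
      rw [← Real.sqrt_mul hy]
      exact Real.sqrt_le_iff.2 ⟨hy, by nlinarith⟩
    linarith
  · exact le_rfl

theorem labelCost_le {l y : ℝ} (hl : 0 < l) {m : ℕ} (hm : ⌊y / l⌋₊ = m + 1) :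
    labelCost m ≤ 4 * (√y / √l) := by
  have hfloor : (m : ℝ) + 1 ≤ y / l := by
    exact_mod_cast (Nat.le_floor_iff' m.succ_ne_zero).1 hm.ge
  have : (0 : ℝ) ≤ m := m.cast_nonneg
  rw [← Real.sqrt_div' y hl.le]
  set t := y / l
  have hsqrt : 0 < √t := Real.sqrt_pos.2 (by linarith)
  have hpow : √t ^ 4 = t * t := by
    rw [show √t ^ 4 = √t ^ 2 * √t ^ 2 by ring, Real.sq_sqrt (by linarith)]
  calc labelCost m ≤ Real.log (2 ^ 3 * √t ^ 4) := by
        refine Real.log_le_log (by positivity) ?_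
        rw [hpow]
        nlinarith
    _ = 3 * Real.log 2 + 4 * Real.log √t := by
        rw [Real.log_mul (by norm_num) (by positivity), Real.log_pow, Real.log_pow]
        norm_num
    _ ≤ 4 * √t := by
        linarith [Real.log_le_sub_one_of_pos hsqrt, Real.log_two_lt_d9]

theorem four_div_sqrt_add_le {l : ℝ} (hl : 10 ≤ l) : 4 / √l + 10 * √l ≤ 10 * √(l + 1) := by
  have : 0 < √l := Real.sqrt_pos.2 (by linarith)
  have hsq : √l ^ 2 = l := Real.sq_sqrt (by linarith)
  have hroot : √l + 0.4 / √l ≤ √(l + 1) := by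
    refine Real.le_sqrt_of_sq_le ?_
    have hexpand : (√l + 0.4 / √l) ^ 2 = l + 0.8 + 0.16 / l := by
      field_simp
      rw [hsq]
      ring
    have hsmall : 0.16 / l ≤ 0.2 := (div_le_iff₀ (by linarith)).2 (by linarith)
    rw [hexpand]
    linarith
  calc 4 / √l + 10 * √l = 10 * (√l + 0.4 / √l) := by ring
    _ ≤ 10 * √(l + 1) := by gcongr

/-- The share `y / Y` of the cost of a cell of mass `Y` which is charged to a child of mass `y`. -/
theorem four_div_sqrt_add_mul_div_sqrt_le {l y Y : ℝ} (hl : 10 ≤ l) (hlY : l ≤ Y) (hy : 0 ≤ y)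
    (hyY : y ≤ Y) : (4 / √l + 10 * √l) * (y / √Y) ≤ 11 * y - cellBudget (l + 1) y := by
  have hsqrtl : 0 < √l := Real.sqrt_pos.2 (by linarith)
  have hsqrtY : 0 < √Y := Real.sqrt_pos.2 (by linarith)
  rw [cellBudget]
  split_ifs with h
  · have hshare : y / √Y ≤ √y := by
      rw [div_le_iff₀ hsqrtY]
      calc y = √y * √y := (Real.mul_self_sqrt hy).symm
        _ ≤ √y * √Y := by gcongr
    calc (4 / √l + 10 * √l) * (y / √Y) ≤ 10 * √(l + 1) * √y :=
          mul_le_mul (four_div_sqrt_add_le hl) hshare (by positivity) (by positivity)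
      _ = 11 * y - (11 * y - 10 * (√y * √(l + 1))) := by ring
  · have hfour : 4 / √l ≤ √l := by
      rw [div_le_iff₀ hsqrtl, Real.mul_self_sqrt (by linarith)]
      linarith
    calc (4 / √l + 10 * √l) * (y / √Y) ≤ 11 * √Y * (y / √Y) := by
          gcongr
          linarith [Real.sqrt_le_sqrt hlY]
      _ = 11 * y - 0 := by
          field_simp
          ring

theorem four_mul_div_add_cellBudget_le {l y z : ℝ} (hl : 10 ≤ l) (hy : 0 ≤ y) (hz : 0 ≤ z)
    (hlyz : l ≤ y + z) : 4 * (√(y + z) / √l) + (cellBudget (l + 1) y + cellBudget (l + 1) z) ≤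
      cellBudget l (y + z) := by
  have hsplit : 4 * (√(y + z) / √l) + 10 * (√(y + z) * √l) =
      (4 / √l + 10 * √l) * (y / √(y + z)) + (4 / √l + 10 * √l) * (z / √(y + z)) := by
    rw [← mul_add, ← add_div, Real.div_sqrt]
    ring
  have hleft := four_div_sqrt_add_mul_div_sqrt_le hl hlyz hy (le_add_of_nonneg_right hz)
  have hright := four_div_sqrt_add_mul_div_sqrt_le hl hlyz hz (le_add_of_nonneg_left hy)
  rw [cellBudget.eq_def l, if_pos hlyz]
  linarith

theorem treeCost_fingerprint_le_cellBudget {x : ℕ → ℤ → ℝ} (hx : IsDyadicMass x) (d j : ℕ)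
    (k : ℤ) :
    treeCost labelCost (fingerprint x d j k) ≤ cellBudget (j + 10) (x j k) := by
  induction d generalizing j k with
  | zero => exact cellBudget_nonneg (by positivity)
  | succ d ih =>
    rw [fingerprint]
    split
    · exact cellBudget_nonneg (by positivity)
    · rename_i m hm
      have hl : (0 : ℝ) < j + 10 := by positivity
      have hheavy : (j : ℝ) + 10 ≤ x j k := by
        have := (Nat.floor_pos.1 (hm ▸ m.succ_pos) : 1 ≤ x j k / (j + 10))
        rwa [one_le_div hl] at this
      have hcell := labelCost_le hl hm
      have hleft := ih (j + 1) (2 * k)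
      have hright := ih (j + 1) (2 * k + 1)
      have hchildren := four_mul_div_add_cellBudget_le (l := (j : ℝ) + 10) (by simp) (hx.nonneg _ _)
        (hx.nonneg _ _) (hx.add j k ▸ hheavy)
      rw [← hx.add] at hchildren
      rw [Nat.cast_succ, add_right_comm] at hleft hright
      rw [treeCost]
      linarith

theorem treeCost_fingerprint_le {x : ℕ → ℤ → ℝ} (hx : IsDyadicMass x) (d j : ℕ) (k : ℤ) :
    treeCost labelCost (fingerprint x d j k) ≤ 11 * x j k :=
  (treeCost_fingerprint_le_cellBudget hx d j k).trans (cellBudget_le (hx.nonneg j k))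

end Fingerprint

section EqualFingerprints

variable {x z : ℕ → ℤ → ℝ}

theorem IsDyadicMass.const_mul {c : ℝ} (hx : IsDyadicMass x) (hc : 0 ≤ c) :
    IsDyadicMass fun j k ↦ c * x j k where
  nonneg j k := mul_nonneg hc (hx.nonneg j k)
  add j k := by rw [hx.add j k, mul_add]

theorem dyadicEnergy_const_mul (c : ℝ) (z : ℕ → ℤ → ℝ) (d j : ℕ) (k : ℤ) :
    dyadicEnergy (fun j k ↦ c * z j k) d j k = c ^ 2 * dyadicEnergy z d j k := by
  induction d generalizing j k with
  | zero => simp [dyadicEnergy]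
  | succ d ih =>
    rw [dyadicEnergy, dyadicEnergy, ih, ih]
    ring

theorem dyadicEnergy_sub_le (hx : IsDyadicMass x) (hz : IsDyadicMass z) (d j : ℕ) (k : ℤ) :
    dyadicEnergy (fun j k ↦ x j k - z j k) d j k ≤ dyadicEnergy x d j k + dyadicEnergy z d j k := by
  induction d generalizing j k with
  | zero => simp [dyadicEnergy]
  | succ d ih =>
    have hleft := ih (j + 1) (2 * k)
    have hright := ih (j + 1) (2 * k + 1)
    have hroot : scaleWeight j * (x j k - z j k) ^ 2 ≤
        scaleWeight j * (x j k ^ 2 + z j k ^ 2) := by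
      have hprod := mul_nonneg (hx.nonneg j k) (hz.nonneg j k)
      gcongr
      · exact scaleWeight_nonneg j
      · linarith [sub_sq (x j k) (z j k)]
    simp only [dyadicEnergy]
    linarith

theorem dyadicEnergy_le_sq_div (hx : IsDyadicMass x) (d j : ℕ) (k : ℤ) :
    dyadicEnergy x d j k ≤ x j k ^ 2 / (j + 9) := by
  induction d generalizing j k with
  | zero =>
    rw [dyadicEnergy]
    positivity
  | succ d ih =>
    have hleft := ih (j + 1) (2 * k)
    have hright := ih (j + 1) (2 * k + 1)
    have hindex : ((j + 1 : ℕ) : ℝ) + 9 = j + 10 := by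
      push_cast
      ring
    have hsq : x (j + 1) (2 * k) ^ 2 + x (j + 1) (2 * k + 1) ^ 2 ≤ x j k ^ 2 := by
      rw [hx.add j k, add_sq']
      have := hx.nonneg (j + 1) (2 * k)
      have := hx.nonneg (j + 1) (2 * k + 1)
      exact le_add_of_nonneg_right (by positivity)
    rw [hindex] at hleft hright
    calc dyadicEnergy x (d + 1) j k
        ≤ scaleWeight j * x j k ^ 2 + (x (j + 1) (2 * k) ^ 2 / ((j : ℝ) + 10) +
            x (j + 1) (2 * k + 1) ^ 2 / ((j : ℝ) + 10)) := by
          rw [dyadicEnergy]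
          gcongr
      _ ≤ scaleWeight j * x j k ^ 2 + x j k ^ 2 / ((j : ℝ) + 10) := by
          rw [← add_div]
          gcongr
      _ = x j k ^ 2 * (((j : ℝ) + 11) / ((j : ℝ) + 10) ^ 2) := by
          rw [scaleWeight]
          field_simp
          ring
      _ ≤ x j k ^ 2 * (1 / ((j : ℝ) + 9)) := by
          gcongr ?_ * ?_
          rw [div_le_div_iff₀ (by positivity) (by positivity)]
          linarith
      _ = x j k ^ 2 / (j + 9) := by ring

theorem dyadicEnergy_le_of_floor_eq_zero (hx : IsDyadicMass x) (d : ℕ) {j : ℕ} {k : ℤ}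
    (hlight : ⌊x j k / (j + 10)⌋₊ = 0) : dyadicEnergy x d j k ≤ 2 * x j k := by
  have hlt : x j k < j + 10 := by
    rwa [Nat.floor_eq_zero, div_lt_one (by positivity)] at hlight
  refine (dyadicEnergy_le_sq_div hx d j k).trans ((div_le_iff₀ (by positivity)).2 ?_)
  nlinarith [hx.nonneg j k, (Nat.cast_nonneg j : (0 : ℝ) ≤ j)]

theorem one_le_labelCost (m : ℕ) : 1 ≤ labelCost m := by
  rw [labelCost, Real.le_log_iff_exp_le (by positivity)]
  nlinarith [Real.exp_one_lt_d9, (Nat.cast_nonneg m : (0 : ℝ) ≤ m)]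

theorem scaleWeight_mul_sub_sq_le_one {j m : ℕ} {u v : ℝ} (hu : ⌊u / (j + 10)⌋₊ = m + 1)
    (hv : ⌊v / (j + 10)⌋₊ = m + 1) : scaleWeight j * (u - v) ^ 2 ≤ 1 := by
  obtain ⟨hu1, hu2⟩ := (Nat.floor_eq_iff' m.succ_ne_zero).1 hu
  obtain ⟨hv1, hv2⟩ := (Nat.floor_eq_iff' m.succ_ne_zero).1 hv
  rw [scaleWeight, ← mul_pow, mul_sub, inv_mul_eq_div, inv_mul_eq_div, sq_le_one_iff_abs_le_one,
    abs_le]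
  constructor <;> linarith

theorem dyadicEnergy_sub_le_of_fingerprint_eq (hx : IsDyadicMass x) (hz : IsDyadicMass z)
    {d j : ℕ} {k : ℤ} (h : fingerprint x d j k = fingerprint z d j k) :
    dyadicEnergy (fun j k ↦ x j k - z j k) d j k ≤
      treeCost labelCost (fingerprint x d j k) + 2 * (x j k + z j k) := by
  induction d generalizing j k with
  | zero =>
    have := hx.nonneg j k
    have := hz.nonneg j k
    simp only [dyadicEnergy, fingerprint, treeCost]
    positivity
  | succ d ih =>
    cases hxm : ⌊x j k / (j + 10)⌋₊ with
    | zero =>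
      cases hzm : ⌊z j k / (j + 10)⌋₊ with
      | zero =>
        have hsub := dyadicEnergy_sub_le hx hz (d + 1) j k
        have hxlight := dyadicEnergy_le_of_floor_eq_zero hx (d + 1) hxm
        have hzlight := dyadicEnergy_le_of_floor_eq_zero hz (d + 1) hzm
        simp only [fingerprint, hxm, treeCost]
        linarith
      | succ m => simp [fingerprint, hxm, hzm] at h
    | succ m =>
      cases hzm : ⌊z j k / (j + 10)⌋₊ with
      | zero => simp [fingerprint, hxm, hzm] at h
      | succ m' =>
        simp only [fingerprint, hxm, hzm, BinaryTree.node.injEq] at h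
        obtain ⟨rfl, hleft, hright⟩ := h
        have hcell := scaleWeight_mul_sub_sq_le_one hxm hzm
        have hlabel := one_le_labelCost m
        have hxadd := hx.add j k
        have hzadd := hz.add j k
        simp only [fingerprint, hxm, treeCost, dyadicEnergy]
        linarith [ih hleft, ih hright]

end EqualFingerprints

section MeasureFingerprint

/-- `μ` has total mass at most one and is concentrated on `s`. -/
structure IsSubprobabilityOn (s : Set ℝ) (μ : Measure ℝ) : Prop where
  measure_univ_le_one : μ univ ≤ 1
  measure_compl : μ sᶜ = 0

theorem IsSubprobabilityOn.isFiniteMeasure {s : Set ℝ} {μ : Measure ℝ}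
    (h : IsSubprobabilityOn s μ) : IsFiniteMeasure μ :=
  ⟨h.measure_univ_le_one.trans_lt ENNReal.one_lt_top⟩

/-- The fingerprint of a measure at scale `n`: that of its cell masses in units of `1 / n`. -/
noncomputable def measureFingerprint (n : ℕ) (μ : Measure ℝ) : BinaryTree ℕ :=
  fingerprint (fun j k ↦ n * cellMass μ j k) n 0 0

variable {n : ℕ} {μ ν : Measure ℝ}

theorem cellMass_le_one (hμ : IsSubprobabilityOn (Ico 0 1) μ) (j : ℕ) (k : ℤ) :
    cellMass μ j k ≤ 1 :=
  ENNReal.toReal_le_of_le_ofReal zero_le_one <| by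
    rw [ENNReal.ofReal_one]
    exact (measure_mono (subset_univ _)).trans hμ.measure_univ_le_one

theorem treeCost_measureFingerprint_le (n : ℕ) (hμ : IsSubprobabilityOn (Ico 0 1) μ) :
    treeCost labelCost (measureFingerprint n μ) ≤ 11 * n := by
  have := hμ.isFiniteMeasure
  calc treeCost labelCost (measureFingerprint n μ) ≤ 11 * (n * cellMass μ 0 0) :=
        treeCost_fingerprint_le ((isDyadicMass_cellMass μ).const_mul n.cast_nonneg) n 0 0
    _ ≤ 11 * (n * 1) := by
        gcongr
        exact cellMass_le_one hμ 0 0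
    _ = 11 * n := by rw [mul_one]

theorem exists_finset_measureFingerprint_mem (hn : n ≠ 0) :
    ∃ S : Finset (BinaryTree ℕ), (S.card : ℝ) ≤ Real.exp (12 * n) ∧
      ∀ μ, IsSubprobabilityOn (Ico 0 1) μ → measureFingerprint n μ ∈ S := by
  obtain ⟨S, hcard, hS⟩ := exists_finset_treeCost_le sum_exp_neg_labelCost_le (11 * n)
  refine ⟨S, hcard.trans ?_, fun μ hμ ↦ hS _ (treeCost_measureFingerprint_le n hμ)⟩
  have hone : (1 : ℝ) ≤ n := by exact_mod_cast Nat.one_le_iff_ne_zero.2 hn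
  calc 2 * Real.exp (11 * n) ≤ Real.exp n * Real.exp (11 * n) := by
        gcongr
        linarith [Real.add_one_le_exp (n : ℝ)]
    _ = Real.exp (12 * n) := by
        rw [← Real.exp_add]
        ring_nf

theorem dyadicEnergy_cellMass_sub_le (hn : n ≠ 0) (hμ : IsSubprobabilityOn (Ico 0 1) μ)
    (hν : IsSubprobabilityOn (Ico 0 1) ν) (h : measureFingerprint n μ = measureFingerprint n ν) :
    dyadicEnergy (fun j k ↦ cellMass μ j k - cellMass ν j k) n 0 0 ≤ 15 / n := by
  have := hμ.isFiniteMeasure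
  have := hν.isFiniteMeasure
  have hpos : (0 : ℝ) < n := by exact_mod_cast Nat.pos_of_ne_zero hn
  have hcost := treeCost_measureFingerprint_le n hμ
  have henergy := dyadicEnergy_sub_le_of_fingerprint_eq
    ((isDyadicMass_cellMass μ).const_mul hpos.le) ((isDyadicMass_cellMass ν).const_mul hpos.le) h
  simp only [← mul_sub, dyadicEnergy_const_mul] at henergy
  rw [le_div_iff₀ hpos]
  refine le_of_mul_le_mul_left ?_ hpos
  calc n * (dyadicEnergy (fun j k ↦ cellMass μ j k - cellMass ν j k) n 0 0 * n)
      = n ^ 2 * dyadicEnergy (fun j k ↦ cellMass μ j k - cellMass ν j k) n 0 0 := by ring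
    _ ≤ 11 * n + 2 * (n * cellMass μ 0 0 + n * cellMass ν 0 0) :=
        henergy.trans (by gcongr; exact hcost)
    _ ≤ 11 * n + 2 * (n * 1 + n * 1) := by
        gcongr
        exacts [cellMass_le_one hμ 0 0, cellMass_le_one hν 0 0]
    _ = n * 15 := by ring

theorem energy_potentialDiff_le_of_measureFingerprint_eq (hn : n ≠ 0)
    (hμ : IsSubprobabilityOn (Ico 0 1) μ) (hν : IsSubprobabilityOn (Ico 0 1) ν)
    (h : measureFingerprint n μ = measureFingerprint n ν) :
    energy (potentialDiff criticalKernel μ ν) ≤ ENNReal.ofReal (12000000 / n) := by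
  have := hμ.isFiniteMeasure
  have := hν.isFiniteMeasure
  have hclose := dyadicEnergy_cellMass_sub_le hn hμ hν h
  obtain ⟨D, rfl⟩ := Nat.exists_eq_succ_of_ne_zero hn
  refine (energy_potentialDiff_criticalKernel_le_dyadicEnergy hμ.measure_univ_le_one
    hν.measure_univ_le_one hμ.measure_compl hν.measure_compl D).trans ?_
  gcongr
  calc 738000 * dyadicEnergy (fun j k ↦ cellMass μ j k - cellMass ν j k) (D + 1) 0 0 +
        200000 / ((D : ℝ) + 1)
      ≤ 738000 * (15 / (D + 1 : ℕ)) + 200000 / ((D : ℝ) + 1) := by gcongr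
    _ = 11270000 / (D + 1 : ℕ) := by
        push_cast
        ring
    _ ≤ 12000000 / (D + 1 : ℕ) := by
        gcongr
        norm_num

end MeasureFingerprint

section HilbertDuality

variable {H : Type*} [NormedAddCommGroup H] [InnerProductSpace ℝ H]

/-- `N` is an `ε`-net of the closed unit ball for the gauge `f ↦ sup {⟪f, h⟫ | h ∈ T}` of the
polar of `T`. -/
def IsPolarNet (T : Set H) (ε : ℝ) (N : Finset H) : Prop :=
  ∀ f : H, ‖f‖ ≤ 1 → ∃ g ∈ N, ∀ h ∈ T, inner ℝ (f - g) h ≤ ε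

theorem inner_sub_self_le_norm_sq_div_four (f x : H) : inner ℝ (f - x) x ≤ ‖f‖ ^ 2 / 4 := by
  have hsq : 0 ≤ ‖f - (2 : ℝ) • x‖ ^ 2 := by positivity
  rw [norm_sub_sq_real, norm_smul, inner_smul_right, Real.norm_ofNat] at hsq
  rw [inner_sub_left, real_inner_self_eq_norm_sq]
  linarith

theorem exists_mem_forall_inner_sub_le [CompleteSpace H] {S : Set H} (hclosed : IsClosed S)
    (hconvex : Convex ℝ S) (hne : S.Nonempty) (f : H) :
    ∃ x ∈ S, ∀ h ∈ S, inner ℝ (f - x) h ≤ ‖f‖ ^ 2 / 4 := by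
  obtain ⟨x, hxS, hmin⟩ :=
    exists_norm_eq_iInf_of_complete_convex hne hclosed.isComplete hconvex f
  rw [norm_eq_iInf_iff_real_inner_le_zero hconvex hxS] at hmin
  refine ⟨x, hxS, fun h hh ↦ ?_⟩
  have hobtuse := hmin h hh
  rw [inner_sub_right] at hobtuse
  linarith [inner_sub_self_le_norm_sq_div_four f x]

theorem exists_norm_sub_le_of_mem_closure {E : Type*} [SeminormedAddCommGroup E] {T : Set E}
    {N : Finset E} {δ : ℝ} (hcover : ∀ x ∈ T, ∃ g ∈ N, ‖x - g‖ ≤ δ) :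
    ∀ x ∈ closure T, ∃ g ∈ N, ‖x - g‖ ≤ δ := by
  have hclosed : IsClosed (⋃ g ∈ N, Metric.closedBall g δ) :=
    N.finite_toSet.isClosed_biUnion fun g _ ↦ Metric.isClosed_closedBall
  have hsub : closure T ⊆ ⋃ g ∈ N, Metric.closedBall g δ := by
    refine closure_minimal (fun x hx ↦ ?_) hclosed
    simpa only [mem_iUnion, Metric.mem_closedBall, dist_eq_norm, exists_prop] using hcover x hx
  intro x hx
  simpa only [mem_iUnion, Metric.mem_closedBall, dist_eq_norm, exists_prop] using hsub hx

variable [CompleteSpace H] {T : Set H} (hclosed : IsClosed T) (hconvex : Convex ℝ T)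
  (hne : T.Nonempty)
include hclosed hconvex hne

theorem exists_smul_mem_forall_inner_sub_le {ε : ℝ} (hε : 0 < ε) {f : H} (hf : ‖f‖ ≤ 1) :
    ∃ x : H, (ε / 2) • x ∈ T ∧ ∀ h ∈ T, inner ℝ (f - x) h ≤ ε / 8 := by
  have hunit : ε / 2 * (2 / ε) = 1 := by field_simp
  have hscale (h : H) (hh : h ∈ T) : (2 / ε) • h ∈ (fun x ↦ (ε / 2) • x) ⁻¹' T := by
    rwa [mem_preimage, smul_smul, hunit, one_smul]
  obtain ⟨x, hx, hxle⟩ := exists_mem_forall_inner_sub_le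
    (hclosed.preimage (continuous_const_smul (ε / 2)))
    (hconvex.is_linear_preimage (IsLinearMap.isLinearMap_smul (ε / 2)))
    (hne.elim fun h hh ↦ ⟨_, hscale h hh⟩) f
  refine ⟨x, hx, fun h hh ↦ ?_⟩
  have hle := hxle _ (hscale h hh)
  have hf2 : ‖f‖ ^ 2 ≤ 1 := pow_le_one₀ (norm_nonneg f) hf
  rw [inner_smul_right] at hle
  calc inner ℝ (f - x) h = ε / 2 * (2 / ε * inner ℝ (f - x) h) := by
        rw [← mul_assoc, hunit, one_mul]
    _ ≤ ε / 2 * (1 / 4) := by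
        gcongr
        linarith
    _ = ε / 8 := by ring

/-- Replace `f` by its projection `x` to `(2 / ε) T`, approximate `(ε / 2) x` in norm by `g₁`, and
apply the net at the coarser scale `2 ε` to the normalized error. -/
theorem IsPolarNet.exists_card_le_mul {ε : ℝ} (hε : 0 < ε) {N₁ N₂ : Finset H}
    (hcover : ∀ x ∈ T, ∃ g ∈ N₁, ‖x - g‖ ≤ ε / 8) (hnet : IsPolarNet T (2 * ε) N₂) :
    ∃ N : Finset H, N.card ≤ N₁.card * N₂.card ∧ IsPolarNet T ε N := by
  classical
  refine ⟨(N₁ ×ˢ N₂).image fun p ↦ (2 / ε) • (p.1 + (ε / 8) • p.2),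
    Finset.card_image_le.trans (Finset.card_product _ _).le, fun f hf ↦ ?_⟩
  obtain ⟨x, hxT, hx⟩ := exists_smul_mem_forall_inner_sub_le hclosed hconvex hne hε hf
  obtain ⟨g₁, hg₁, hdist⟩ := hcover _ hxT
  have hnorm : ‖(8 / ε) • ((ε / 2) • x - g₁)‖ ≤ 1 := by
    rw [norm_smul, Real.norm_of_nonneg (by positivity)]
    calc 8 / ε * ‖(ε / 2) • x - g₁‖ ≤ 8 / ε * (ε / 8) := by gcongr
      _ = 1 := by field_simp
  obtain ⟨g₂, hg₂, herror⟩ := hnet _ hnorm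
  refine ⟨_, Finset.mem_image.2 ⟨(g₁, g₂), Finset.mk_mem_product hg₁ hg₂, rfl⟩, fun h hh ↦ ?_⟩
  have hsplit : f - (2 / ε) • (g₁ + (ε / 8) • g₂) =
      (f - x) + (1 / 4 : ℝ) • ((8 / ε) • ((ε / 2) • x - g₁) - g₂) := by
    match_scalars <;> field_simp <;> norm_num
  calc inner ℝ (f - (2 / ε) • (g₁ + (ε / 8) • g₂)) h
      = inner ℝ (f - x) h + 1 / 4 * inner ℝ ((8 / ε) • ((ε / 2) • x - g₁) - g₂) h := by
        rw [hsplit, inner_add_left, real_inner_smul_left]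
    _ ≤ ε / 8 + 1 / 4 * (2 * ε) := by
        gcongr
        exacts [hx h hh, herror h hh]
    _ ≤ ε := by linarith

/-- Duality of entropy in Hilbert space, by downward iteration over the scales `2 ^ m * ε`. -/
theorem exists_isPolarNet_card_le_of_isClosed (hbounded : Bornology.IsBounded T) {c : ℝ}
    (hc : 0 ≤ c) (hcover : ∀ δ : ℝ, 0 < δ → ∃ N : Finset H,
      (N.card : ℝ) ≤ Real.exp (c / δ ^ 2) ∧ ∀ x ∈ T, ∃ g ∈ N, ‖x - g‖ ≤ δ)
    {ε : ℝ} (hε : 0 < ε) :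
    ∃ N : Finset H, (N.card : ℝ) ≤ Real.exp (100 * c / ε ^ 2) ∧ IsPolarNet T ε N := by
  obtain ⟨R, hR⟩ := hbounded.exists_norm_le
  obtain ⟨m, hm⟩ := pow_unbounded_of_one_lt (R / ε) (one_lt_two (α := ℝ))
  have hRm : R ≤ 2 ^ m * ε := ((div_lt_iff₀ hε).1 hm).le
  clear hm
  induction m generalizing ε with
  | zero =>
    refine ⟨{0}, ?_, fun f hf ↦ ⟨0, Finset.mem_singleton_self 0, fun h hh ↦ ?_⟩⟩
    · rw [Finset.card_singleton, Nat.cast_one]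
      exact Real.one_le_exp (by positivity)
    · rw [sub_zero]
      calc inner ℝ f h ≤ ‖f‖ * ‖h‖ := real_inner_le_norm f h
        _ ≤ 1 * R := mul_le_mul hf (hR h hh) (norm_nonneg h) zero_le_one
        _ ≤ ε := by linarith
  | succ m ih =>
    obtain ⟨N₂, hcard₂, hnet⟩ := ih (ε := 2 * ε) (by positivity) (by rw [pow_succ] at hRm; linarith)
    obtain ⟨N₁, hcard₁, hN₁⟩ := hcover (ε / 8) (by positivity)
    obtain ⟨N, hcard, hN⟩ := hnet.exists_card_le_mul hclosed hconvex hne hε hN₁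
    refine ⟨N, ?_, hN⟩
    calc (N.card : ℝ) ≤ N₁.card * N₂.card := by exact_mod_cast hcard
      _ ≤ Real.exp (c / (ε / 8) ^ 2) * Real.exp (100 * c / (2 * ε) ^ 2) := by gcongr
      _ = Real.exp (89 * c / ε ^ 2) := by
          rw [← Real.exp_add]
          congr 1
          field_simp
          ring
      _ ≤ Real.exp (100 * c / ε ^ 2) := by
          gcongr
          norm_num

omit hclosed in
theorem exists_isPolarNet_card_le (hbounded : Bornology.IsBounded T) {c : ℝ} (hc : 0 ≤ c)
    (hcover : ∀ δ : ℝ, 0 < δ → ∃ N : Finset H,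
      (N.card : ℝ) ≤ Real.exp (c / δ ^ 2) ∧ ∀ x ∈ T, ∃ g ∈ N, ‖x - g‖ ≤ δ)
    {ε : ℝ} (hε : 0 < ε) :
    ∃ N : Finset H, (N.card : ℝ) ≤ Real.exp (100 * c / ε ^ 2) ∧ IsPolarNet T ε N := by
  have hcover_closure (δ : ℝ) (hδ : 0 < δ) : ∃ N : Finset H,
      (N.card : ℝ) ≤ Real.exp (c / δ ^ 2) ∧ ∀ x ∈ closure T, ∃ g ∈ N, ‖x - g‖ ≤ δ :=
    (hcover δ hδ).imp fun _ hN ↦ ⟨hN.1, exists_norm_sub_le_of_mem_closure hN.2⟩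
  obtain ⟨N, hcard, hN⟩ := exists_isPolarNet_card_le_of_isClosed isClosed_closure hconvex.closure
    hne.closure hbounded.closure hc hcover_closure hε
  exact ⟨N, hcard, fun f hf ↦ (hN f hf).imp fun _ hg ↦
    ⟨hg.1, fun h hh ↦ hg.2 h (subset_closure hh)⟩⟩

end HilbertDuality

section CriticalPotentials

theorem IsSubprobabilityOn.zero (s : Set ℝ) : IsSubprobabilityOn s 0 :=
  ⟨zero_le_one, rfl⟩

theorem IsSubprobabilityOn.dirac {s : Set ℝ} {t : ℝ} (ht : t ∈ s) :
    IsSubprobabilityOn s (Measure.dirac t) :=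
  ⟨measure_univ.le, by rw [Measure.dirac_apply, indicator_of_notMem (notMem_compl_iff.2 ht)]⟩

theorem IsSubprobabilityOn.convexCombo {s : Set ℝ} {μ ν : Measure ℝ} (hμ : IsSubprobabilityOn s μ)
    (hν : IsSubprobabilityOn s ν) {a b : ℝ} (ha : 0 ≤ a) (hb : 0 ≤ b) (hab : a + b = 1) :
    IsSubprobabilityOn s (ENNReal.ofReal a • μ + ENNReal.ofReal b • ν) where
  measure_univ_le_one := by
    calc ENNReal.ofReal a * μ univ + ENNReal.ofReal b * ν univ
        ≤ ENNReal.ofReal a * 1 + ENNReal.ofReal b * 1 := by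
          gcongr
          exacts [hμ.measure_univ_le_one, hν.measure_univ_le_one]
      _ = 1 := by rw [mul_one, mul_one, ← ENNReal.ofReal_add ha hb, hab, ENNReal.ofReal_one]
  measure_compl := by
    simp [hμ.measure_compl, hν.measure_compl]

theorem IsSubprobabilityOn.mono {s s' : Set ℝ} {μ ν : Measure ℝ} (h : IsSubprobabilityOn s ν)
    (hs : s ⊆ s') (hμ : μ ≤ ν) : IsSubprobabilityOn s' μ where
  measure_univ_le_one := (hμ univ).trans h.measure_univ_le_one
  measure_compl := measure_mono_null (compl_subset_compl.2 hs)
    (nonpos_iff_eq_zero.1 ((hμ _).trans_eq h.measure_compl))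

theorem potential_convexCombo_ae_eq {φ : ℝ → ℝ} (hφ : Measurable φ) (hint : Integrable φ)
    (μ ν : Measure ℝ) [IsFiniteMeasure μ] [IsFiniteMeasure ν] {a b : ℝ} (ha : 0 ≤ a) (hb : 0 ≤ b) :
    potential φ (ENNReal.ofReal a • μ + ENNReal.ofReal b • ν) =ᵐ[volume]
      fun s ↦ a * potential φ μ s + b * potential φ ν s := by
  filter_upwards [(integrable_kernel_prod hφ μ hint).prod_right_ae,
    (integrable_kernel_prod hφ ν hint).prod_right_ae] with s hμ hν
  simp only [potential]
  rw [integral_add_measure (hμ.smul_measure ENNReal.ofReal_ne_top)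
      (hν.smul_measure ENNReal.ofReal_ne_top), integral_smul_measure, integral_smul_measure,
    ENNReal.toReal_ofReal ha, ENNReal.toReal_ofReal hb, smul_eq_mul, smul_eq_mul]

theorem ofReal_norm_sq_eq_energy {h : Lp ℝ 2 (volume : Measure ℝ)} {u : ℝ → ℝ}
    (hu : h =ᵐ[volume] u) : ENNReal.ofReal (‖h‖ ^ 2) = energy u := by
  rw [energy_eq_eLpNorm_sq, ← eLpNorm_congr_ae hu, ENNReal.ofReal_pow (norm_nonneg h), Lp.norm_def,
    ENNReal.ofReal_toReal (Lp.eLpNorm_ne_top h)]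

theorem norm_le_of_energy_le {h : Lp ℝ 2 (volume : Measure ℝ)} {u : ℝ → ℝ}
    (hu : h =ᵐ[volume] u) {a : ℝ} (ha : 0 ≤ a) (hle : energy u ≤ ENNReal.ofReal (a ^ 2)) :
    ‖h‖ ≤ a := by
  rw [← ofReal_norm_sq_eq_energy hu, ENNReal.ofReal_le_ofReal_iff (sq_nonneg a)] at hle
  exact le_of_sq_le_sq hle ha

theorem energy_sub_le {u v : ℝ → ℝ} (hu : Measurable u) (hv : Measurable v) {a : ℝ≥0∞}
    (hua : energy u ≤ a) (hva : energy v ≤ a) : energy (fun s ↦ u s - v s) ≤ 4 * a := by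
  calc energy (fun s ↦ u s - v s) ≤ ENNReal.ofReal 2 * energy u + ENNReal.ofReal 2 * energy v :=
        energy_le_add_of_sq_le zero_le_two zero_le_two hu hv fun s ↦ by
          nlinarith [sq_nonneg (u s + v s)]
    _ ≤ 2 * a + 2 * a := by
        rw [ENNReal.ofReal_ofNat]
        gcongr
    _ = 4 * a := by ring

/-- The images under `V*` of the differences of subprobability measures on `[0, 1)`, as a symmetric
convex subset of `L₂`. -/
def criticalPotentials : Set (Lp ℝ 2 (volume : Measure ℝ)) :=
  {h | ∃ μ ν : Measure ℝ, IsSubprobabilityOn (Ico 0 1) μ ∧ IsSubprobabilityOn (Ico 0 1) ν ∧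
    h =ᵐ[volume] potentialDiff criticalKernel μ ν}

theorem criticalPotentials_nonempty : criticalPotentials.Nonempty := by
  refine ⟨0, 0, 0, .zero _, .zero _, (Lp.coeFn_zero ℝ 2 volume).trans (.of_forall fun s ↦ ?_)⟩
  simp only [Pi.zero_apply, potentialDiff, sub_self]

theorem convex_criticalPotentials : Convex ℝ criticalPotentials := by
  rintro x ⟨μ, ν, hμ, hν, hx⟩ y ⟨μ', ν', hμ', hν', hy⟩ a b ha hb hab
  have := hμ.isFiniteMeasure
  have := hν.isFiniteMeasure
  have := hμ'.isFiniteMeasure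
  have := hν'.isFiniteMeasure
  refine ⟨_, _, hμ.convexCombo hμ' ha hb hab, hν.convexCombo hν' ha hb hab, ?_⟩
  filter_upwards [hx, hy, Lp.coeFn_add (a • x) (b • y), Lp.coeFn_smul a x, Lp.coeFn_smul b y,
    potential_convexCombo_ae_eq measurable_criticalKernel integrable_criticalKernel μ μ' ha hb,
    potential_convexCombo_ae_eq measurable_criticalKernel integrable_criticalKernel ν ν' ha hb]
    with s hxs hys hadd hax hby hpos hneg
  rw [hadd, Pi.add_apply, hax, hby, Pi.smul_apply, Pi.smul_apply, hxs, hys]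
  simp only [potentialDiff, hpos, hneg, smul_eq_mul]
  ring

theorem energy_potential_criticalKernel_le {s : Set ℝ} {μ : Measure ℝ}
    (hμ : IsSubprobabilityOn s μ) :
    energy (potential criticalKernel μ) ≤ energy criticalKernel := by
  have := hμ.isFiniteMeasure
  calc energy (potential criticalKernel μ) ≤ μ univ ^ 2 * energy criticalKernel :=
        energy_potential_le measurable_criticalKernel μ
    _ ≤ 1 ^ 2 * energy criticalKernel := by
        gcongr
        exact hμ.measure_univ_le_one
    _ = energy criticalKernel := by rw [one_pow, one_mul]

theorem isBounded_criticalPotentials : Bornology.IsBounded criticalPotentials := by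
  have hfinite : 4 * energy criticalKernel ≠ ∞ := by
    rw [energy_eq_eLpNorm_sq]
    exact ENNReal.mul_ne_top ENNReal.ofNat_ne_top (ENNReal.pow_ne_top memLp_criticalKernel.2.ne)
  refine isBounded_iff_forall_norm_le.2 ⟨√(4 * energy criticalKernel).toReal, ?_⟩
  rintro h ⟨μ, ν, hμ, hν, hh⟩
  have := hμ.isFiniteMeasure
  have := hν.isFiniteMeasure
  refine norm_le_of_energy_le hh (Real.sqrt_nonneg _) ?_
  rw [Real.sq_sqrt ENNReal.toReal_nonneg, ENNReal.ofReal_toReal hfinite]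
  exact energy_sub_le (measurable_potential measurable_criticalKernel μ)
    (measurable_potential measurable_criticalKernel ν) (energy_potential_criticalKernel_le hμ)
    (energy_potential_criticalKernel_le hν)

theorem norm_sub_le_of_measureFingerprint_eq {n : ℕ} (hn : n ≠ 0) {μ ν μ' ν' : Measure ℝ}
    (hμ : IsSubprobabilityOn (Ico 0 1) μ) (hν : IsSubprobabilityOn (Ico 0 1) ν)
    (hμ' : IsSubprobabilityOn (Ico 0 1) μ') (hν' : IsSubprobabilityOn (Ico 0 1) ν')
    (hμμ' : measureFingerprint n μ = measureFingerprint n μ')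
    (hνν' : measureFingerprint n ν = measureFingerprint n ν')
    {x y : Lp ℝ 2 (volume : Measure ℝ)} (hx : x =ᵐ[volume] potentialDiff criticalKernel μ ν)
    (hy : y =ᵐ[volume] potentialDiff criticalKernel μ' ν') :
    ‖x - y‖ ≤ √(48000000 / n) := by
  have := hμ.isFiniteMeasure
  have := hν.isFiniteMeasure
  have := hμ'.isFiniteMeasure
  have := hν'.isFiniteMeasure
  have hsub : (x - y : Lp ℝ 2 (volume : Measure ℝ)) =ᵐ[volume] fun s ↦
      potentialDiff criticalKernel μ μ' s - potentialDiff criticalKernel ν ν' s := by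
    filter_upwards [hx, hy, Lp.coeFn_sub x y] with s hxs hys hxys
    rw [hxys, Pi.sub_apply, hxs, hys]
    simp only [potentialDiff]
    ring
  refine norm_le_of_energy_le hsub (Real.sqrt_nonneg _) ?_
  calc energy _ ≤ 4 * ENNReal.ofReal (12000000 / n) :=
        energy_sub_le (measurable_potentialDiff measurable_criticalKernel μ μ')
          (measurable_potentialDiff measurable_criticalKernel ν ν')
          (energy_potentialDiff_le_of_measureFingerprint_eq hn hμ hμ' hμμ')
          (energy_potentialDiff_le_of_measureFingerprint_eq hn hν hν' hνν')
    _ = ENNReal.ofReal (√(48000000 / n) ^ 2) := by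
        rw [Real.sq_sqrt (by positivity), ← ENNReal.ofReal_ofNat 4,
          ← ENNReal.ofReal_mul zero_le_four]
        ring_nf

theorem exists_finset_norm_sub_le_of_mapsTo {E ι : Type*} [SeminormedAddCommGroup E] {T : Set E}
    {S : Finset ι} {label : E → ι} (hlabel : MapsTo label T S) {δ : ℝ}
    (hclose : ∀ x ∈ T, ∀ y ∈ T, label x = label y → ‖x - y‖ ≤ δ) :
    ∃ N : Finset E, N.card ≤ S.card ∧ ∀ x ∈ T, ∃ g ∈ N, ‖x - g‖ ≤ δ := by
  classical
  refine ⟨S.image (Function.invFunOn label T), Finset.card_image_le, fun x hx ↦ ?_⟩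
  have hfiber : ∃ y ∈ T, label y = label x := ⟨x, hx, rfl⟩
  exact ⟨_, Finset.mem_image_of_mem _ (hlabel hx), hclose x hx _ (Function.invFunOn_mem hfiber)
    (Function.invFunOn_eq hfiber).symm⟩

theorem exists_finset_criticalPotentials_norm_sub_le_sqrt {n : ℕ} (hn : n ≠ 0) :
    ∃ N : Finset (Lp ℝ 2 (volume : Measure ℝ)), (N.card : ℝ) ≤ Real.exp (24 * n) ∧
      ∀ x ∈ criticalPotentials, ∃ g ∈ N, ‖x - g‖ ≤ √(48000000 / n) := by
  obtain ⟨S, hcard, hS⟩ := exists_finset_measureFingerprint_mem hn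
  have hrepr : ∀ x ∈ criticalPotentials, ∃ μ ν : Measure ℝ, IsSubprobabilityOn (Ico 0 1) μ ∧
    IsSubprobabilityOn (Ico 0 1) ν ∧ x =ᵐ[volume] potentialDiff criticalKernel μ ν := fun _ hx ↦ hx
  choose! μ ν hμ hν hx using hrepr
  obtain ⟨N, hN, hcover⟩ := exists_finset_norm_sub_le_of_mapsTo (S := S ×ˢ S)
    (T := criticalPotentials) (δ := √(48000000 / n))
    (label := fun x ↦ (measureFingerprint n (μ x), measureFingerprint n (ν x)))
    (fun x hxT ↦ Finset.mk_mem_product (hS _ (hμ x hxT)) (hS _ (hν x hxT)))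
    fun x hxT y hyT h ↦ norm_sub_le_of_measureFingerprint_eq hn (hμ x hxT) (hν x hxT) (hμ y hyT)
      (hν y hyT) (Prod.mk.inj h).1 (Prod.mk.inj h).2 (hx x hxT) (hx y hyT)
  refine ⟨N, ?_, hcover⟩
  calc (N.card : ℝ) ≤ S.card * S.card := by exact_mod_cast hN.trans (Finset.card_product S S).le
    _ ≤ Real.exp (12 * n) * Real.exp (12 * n) := by gcongr
    _ = Real.exp (24 * n) := by
        rw [← Real.exp_add]
        ring_nf

theorem exists_finset_criticalPotentials_norm_sub_le :
    ∃ c : ℝ, 0 < c ∧ ∀ δ : ℝ, 0 < δ → ∃ N : Finset (Lp ℝ 2 (volume : Measure ℝ)),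
      (N.card : ℝ) ≤ Real.exp (c / δ ^ 2) ∧ ∀ x ∈ criticalPotentials, ∃ g ∈ N, ‖x - g‖ ≤ δ := by
  obtain ⟨R, hR⟩ := isBounded_criticalPotentials.exists_norm_le
  refine ⟨24 * (48000000 + R ^ 2), by positivity, fun δ hδ ↦ ?_⟩
  rcases le_or_gt R δ with hRδ | hδR
  · refine ⟨{0}, ?_, fun x hx ↦ ⟨0, Finset.mem_singleton_self 0, ?_⟩⟩
    · rw [Finset.card_singleton, Nat.cast_one]
      exact Real.one_le_exp (by positivity)
    · rw [sub_zero]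
      exact (hR x hx).trans hRδ
  · set n := ⌈48000000 / δ ^ 2⌉₊
    have hn : 0 < n := Nat.ceil_pos.2 (by positivity)
    have hn_le : (n : ℝ) ≤ 48000000 / δ ^ 2 + R ^ 2 / δ ^ 2 := by
      have hone : 1 ≤ R ^ 2 / δ ^ 2 := by
        rw [one_le_div (by positivity)]
        gcongr
      exact (Nat.ceil_lt_add_one (by positivity)).le.trans (by gcongr)
    obtain ⟨N, hcard, hN⟩ := exists_finset_criticalPotentials_norm_sub_le_sqrt hn.ne'
    refine ⟨N, hcard.trans (Real.exp_le_exp.2 ?_), fun x hx ↦ (hN x hx).imp fun g hg ↦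
      ⟨hg.1, hg.2.trans (Real.sqrt_le_iff.2 ⟨hδ.le, ?_⟩)⟩⟩
    · calc 24 * (n : ℝ) ≤ 24 * (48000000 / δ ^ 2 + R ^ 2 / δ ^ 2) := by gcongr
        _ = 24 * (48000000 + R ^ 2) / δ ^ 2 := by ring
    · exact (div_le_comm₀ (by positivity) (by positivity)).1 (Nat.le_ceil _)

theorem exists_criticalPotentials_nets :
    ∃ c : ℝ, 0 < c ∧ ∀ ε : ℝ, 0 < ε →
      (∃ N : Finset (Lp ℝ 2 (volume : Measure ℝ)), (N.card : ℝ) ≤ Real.exp (c / ε ^ 2) ∧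
        ∀ x ∈ criticalPotentials, ∃ g ∈ N, ‖x - g‖ ≤ ε) ∧
      ∃ N : Finset (Lp ℝ 2 (volume : Measure ℝ)), (N.card : ℝ) ≤ Real.exp (c / ε ^ 2) ∧
        IsPolarNet criticalPotentials ε N := by
  obtain ⟨c, hc, hcover⟩ := exists_finset_criticalPotentials_norm_sub_le
  refine ⟨100 * c, by positivity, fun ε hε ↦ ⟨?_, exists_isPolarNet_card_le
    convex_criticalPotentials criticalPotentials_nonempty isBounded_criticalPotentials hc.le hcover
    hε⟩⟩
  obtain ⟨N, hcard, hN⟩ := hcover ε hε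
  refine ⟨N, hcard.trans ?_, hN⟩
  gcongr
  linarith

end CriticalPotentials

section Volterra

/-- The element `s ↦ K_t(s)` of `L₂` which represents `f ↦ (V f)(t)`. -/
noncomputable def kernelLp (t : ℝ) : Lp ℝ 2 (volume : Measure ℝ) :=
  (memLp_criticalKernel.comp_measurePreserving (Measure.measurePreserving_sub_left volume t)).toLp

theorem coeFn_kernelLp (t : ℝ) : kernelLp t =ᵐ[volume] fun s ↦ criticalKernel (t - s) :=
  MemLp.coeFn_toLp _

variable {t : ℝ}

theorem kernelLp_mem_criticalPotentials (ht : t ∈ Ico (0 : ℝ) 1) :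
    kernelLp t ∈ criticalPotentials := by
  refine ⟨Measure.dirac t, 0, .dirac ht, .zero _, (coeFn_kernelLp t).trans (.of_forall fun s ↦ ?_)⟩
  simp only [potentialDiff, potential, integral_dirac, integral_zero_measure, sub_zero]

theorem neg_kernelLp_mem_criticalPotentials (ht : t ∈ Ico (0 : ℝ) 1) :
    -kernelLp t ∈ criticalPotentials := by
  refine ⟨0, Measure.dirac t, .zero _, .dirac ht, ?_⟩
  filter_upwards [coeFn_kernelLp t, Lp.coeFn_neg (kernelLp t)] with s hs hneg
  rw [hneg, Pi.neg_apply, hs]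
  simp only [potentialDiff, potential, integral_dirac, integral_zero_measure, zero_sub]

theorem abs_inner_kernelLp_sub_le {f g : Lp ℝ 2 (volume : Measure ℝ)} {ε : ℝ}
    (h : ∀ x ∈ criticalPotentials, inner ℝ (f - g) x ≤ ε) (ht : t ∈ Ico (0 : ℝ) 1) :
    |inner ℝ f (kernelLp t) - inner ℝ g (kernelLp t)| ≤ ε := by
  have hpos := h _ (kernelLp_mem_criticalPotentials ht)
  have hneg := h _ (neg_kernelLp_mem_criticalPotentials ht)
  rw [inner_neg_right] at hneg
  rw [← inner_sub_left, abs_le]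
  exact ⟨by linarith, hpos⟩

variable {r : ℝ}

theorem Icc_subset_Ico_zero_one (hr : r < Real.exp (-2)) : Icc 0 r ⊆ Ico (0 : ℝ) 1 :=
  Icc_subset_Ico_right (hr.trans (Real.exp_lt_one_iff.2 (by norm_num)))

theorem Vint_eq_inner_kernelLp (hr : r < Real.exp (-2)) (ht : t ≤ r) {f : ℝ → ℝ}
    {F : Lp ℝ 2 (volume : Measure ℝ)} (hF : F =ᵐ[volume] (Ioc 0 r).indicator f) :
    Vint f t = inner ℝ F (kernelLp t) := by
  rw [L2.inner_def, Vint, ← integral_indicator measurableSet_Ioc]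
  refine integral_congr_ae ?_
  filter_upwards [hF, coeFn_kernelLp t] with s hFs hks
  rw [hFs, hks, RCLike.inner_apply, conj_trivial, mul_comm]
  by_cases hs : s ∈ Ioc 0 t
  · rw [indicator_of_mem hs, indicator_of_mem (Ioc_subset_Ioc_right ht hs),
      Ker_eq_criticalKernel (by linarith [hs.1])]
  rw [indicator_of_notMem hs]
  rcases le_or_gt s 0 with hs0 | hs0
  · rw [indicator_of_notMem fun hs' ↦ hs0.not_gt hs'.1, zero_mul]
  · have hts : t < s := not_le.1 fun hst ↦ hs ⟨hs0, hst⟩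
    rw [criticalKernel_of_nonpos (by linarith), mul_zero]

theorem energy_indicator {s : Set ℝ} (hs : MeasurableSet s) (f : ℝ → ℝ) :
    energy (s.indicator f) = ∫⁻ x in s, ENNReal.ofReal (f x ^ 2) := by
  rw [← lintegral_indicator hs, energy]
  congr with x
  by_cases hx : x ∈ s
  · simp only [indicator_of_mem hx]
  · simp only [indicator_of_notMem hx, zero_pow two_ne_zero, ENNReal.ofReal_zero]

theorem exists_Lp_ae_eq_of_energy_le_one {u : ℝ → ℝ} (hu : Measurable u) (hle : energy u ≤ 1) :
    ∃ F : Lp ℝ 2 (volume : Measure ℝ), ‖F‖ ≤ 1 ∧ F =ᵐ[volume] u := by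
  have hmem : MemLp u 2 := by
    refine ⟨hu.aestronglyMeasurable, ?_⟩
    rw [energy_eq_eLpNorm_sq, pow_le_one_iff two_ne_zero] at hle
    exact hle.trans_lt ENNReal.one_lt_top
  have hcoe := hmem.coeFn_toLp
  exact ⟨_, norm_le_of_energy_le hcoe zero_le_one (by simpa using hle), hcoe⟩

theorem exists_finset_abs_Vint_sub_le (hr : r < Real.exp (-2)) {ε : ℝ}
    {N : Finset (Lp ℝ 2 (volume : Measure ℝ))} (hN : IsPolarNet criticalPotentials ε N) :
    ∃ M : Finset (ℝ → ℝ), M.card ≤ N.card ∧ ∀ f : ℝ → ℝ, Measurable f →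
      (∫⁻ s in Ioc (0 : ℝ) r, ENNReal.ofReal (f s ^ 2)) ≤ 1 →
      ∃ g ∈ M, ∀ t ∈ Icc (0 : ℝ) r, |Vint f t - g t| ≤ ε := by
  classical
  refine ⟨N.image fun g t ↦ inner ℝ g (kernelLp t), Finset.card_image_le, fun f hf hle ↦ ?_⟩
  rw [← energy_indicator measurableSet_Ioc] at hle
  obtain ⟨F, hnorm, hF⟩ := exists_Lp_ae_eq_of_energy_le_one (hf.indicator measurableSet_Ioc) hle
  obtain ⟨g, hg, hFg⟩ := hN F hnorm
  refine ⟨_, Finset.mem_image_of_mem _ hg, fun t ht ↦ ?_⟩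
  rw [Vint_eq_inner_kernelLp hr ht.2 hF]
  exact abs_inner_kernelLp_sub_le hFg (Icc_subset_Ico_zero_one hr ht)

theorem integral_Ker_eq_potential (hr : r < Real.exp (-2)) {s : ℝ} (hs : 0 < s) {μ : Measure ℝ}
    (hμ : IsSubprobabilityOn (Icc 0 r) μ) :
    ∫ t, Ker t s ∂μ = potential criticalKernel μ s := by
  refine integral_congr_ae ?_
  filter_upwards [show ∀ᵐ t ∂μ, t ∈ Icc 0 r from hμ.measure_compl] with t ht
  exact Ker_eq_criticalKernel (by linarith [ht.2])

theorem exists_finset_lintegral_VstarInt_sub_sq_le (hr : r < Real.exp (-2)) {ε : ℝ}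
    {N : Finset (Lp ℝ 2 (volume : Measure ℝ))}
    (hN : ∀ x ∈ criticalPotentials, ∃ g ∈ N, ‖x - g‖ ≤ ε) :
    ∃ M : Finset (ℝ → ℝ), M.card ≤ N.card ∧ ∀ μ : SignedMeasure ℝ,
      μ.totalVariation (Icc (0 : ℝ) r)ᶜ = 0 → μ.totalVariation univ ≤ 1 →
      ∃ g ∈ M, (∫⁻ s in Ioc (0 : ℝ) r, ENNReal.ofReal ((VstarInt μ s - g s) ^ 2)) ≤
        ENNReal.ofReal (ε ^ 2) := by
  classical
  refine ⟨N.image (⇑), Finset.card_image_le, fun μ hsupp hmass ↦ ?_⟩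
  set p := μ.toJordanDecomposition.posPart
  set q := μ.toJordanDecomposition.negPart
  have htotal : IsSubprobabilityOn (Icc 0 r) μ.totalVariation := ⟨hmass, hsupp⟩
  have hp : IsSubprobabilityOn (Icc 0 r) p := htotal.mono subset_rfl (Measure.le_add_right le_rfl)
  have hq : IsSubprobabilityOn (Icc 0 r) q := htotal.mono subset_rfl (Measure.le_add_left le_rfl)
  have hsub := Icc_subset_Ico_zero_one hr
  have hx := ((memLp_potential measurable_criticalKernel p memLp_criticalKernel).sub
    (memLp_potential measurable_criticalKernel q memLp_criticalKernel)).coeFn_toLp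
  obtain ⟨g, hg, hxg⟩ := hN _ ⟨p, q, hp.mono hsub le_rfl, hq.mono hsub le_rfl, hx⟩
  refine ⟨g, Finset.mem_image_of_mem _ hg, ?_⟩
  calc ∫⁻ s in Ioc (0 : ℝ) r, ENNReal.ofReal ((VstarInt μ s - g s) ^ 2)
      = ∫⁻ s in Ioc (0 : ℝ) r, ENNReal.ofReal ((potentialDiff criticalKernel p q s - g s) ^ 2) := by
        refine setLIntegral_congr_fun measurableSet_Ioc fun s hs ↦ ?_
        simp only [VstarInt, potentialDiff, p, q, integral_Ker_eq_potential hr hs.1 hp,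
          integral_Ker_eq_potential hr hs.1 hq]
    _ ≤ energy fun s ↦ potentialDiff criticalKernel p q s - g s := setLIntegral_le_lintegral _ _
    _ = ENNReal.ofReal (‖_ - g‖ ^ 2) :=
        (ofReal_norm_sq_eq_energy ((Lp.coeFn_sub _ g).trans (hx.sub .rfl))).symm
    _ ≤ ENNReal.ofReal (ε ^ 2) := by gcongr

theorem le_two_pow_sub_one_of_le_exp {m n : ℕ} (hn : n ≠ 0) (h : (m : ℝ) ≤ Real.exp (n / 4)) :
    m ≤ 2 ^ (n - 1) := by
  have hexp_half : Real.exp (1 / 2) < 2 := by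
    have hsq : Real.exp (1 / 2) ^ 2 = Real.exp 1 := by
      rw [← Real.exp_nat_mul]
      norm_num
    nlinarith [Real.exp_one_lt_d9, Real.exp_pos (1 / 2)]
  obtain ⟨k, rfl⟩ := Nat.exists_eq_succ_of_ne_zero hn
  rw [Nat.succ_sub_one]
  rcases Nat.eq_zero_or_pos k with rfl | hk
  · have hlt : (m : ℝ) < 2 :=
      h.trans_lt ((Real.exp_le_exp.2 (by norm_num)).trans_lt hexp_half)
    exact Nat.le_of_lt_succ (by exact_mod_cast hlt)
  · have hk1 : (1 : ℝ) ≤ k := by exact_mod_cast hk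
    have hle : (m : ℝ) ≤ 2 ^ k := by
      calc (m : ℝ) ≤ Real.exp ((k + 1 : ℕ) / 4) := h
        _ ≤ Real.exp (k * (1 / 2)) := by
          rw [Real.exp_le_exp]
          push_cast
          linarith
        _ = Real.exp (1 / 2) ^ k := Real.exp_nat_mul _ k
        _ ≤ 2 ^ k := by gcongr
    exact_mod_cast hle

theorem div_sq_le_div_four_of_mul_rpow_lt {c x ε : ℝ} (hc : 0 < c) (hx : 0 < x)
    (h : 2 * √c * x ^ (-(1 : ℝ) / 2) < ε) : c / ε ^ 2 ≤ x / 4 := by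
  have hpos : 0 < 2 * √c * x ^ (-(1 : ℝ) / 2) := by positivity
  have hsq : 4 * c * x⁻¹ ≤ ε ^ 2 := by
    calc 4 * c * x⁻¹ = (2 * √c * x ^ (-(1 : ℝ) / 2)) ^ 2 := by
          rw [mul_pow, mul_pow, Real.sq_sqrt hc.le, ← Real.rpow_mul_natCast hx.le]
          norm_num [Real.rpow_neg_one]
      _ ≤ ε ^ 2 := by gcongr
  rw [← div_eq_mul_inv, div_le_iff₀ hx] at hsq
  rw [div_le_iff₀ (pow_pos (hpos.trans h) 2)]
  linarith

end Volterra

/-- Critical Volterra operator: `max{e_n(V), e_n(V*)} ≤ C n^{-1/2}` for a numerical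
constant `C`. For every `ε` exceeding `C n^{-1/2}`: the image under `V` of the unit
ball of `L₂[0,r]` can be covered by `2^{n-1}` balls of radius `ε` in the supremum
norm on `[0,r]`, and the image under `V*` of the unit ball of `M[0,r]` (signed
measures of total variation at most `1` supported on `[0,r]`) can be covered by
`2^{n-1}` balls of radius `ε` in `L₂[0,r]`. -/
theorem entropy_critical_volterra :
    ∃ C : ℝ, 0 < C ∧ ∀ r : ℝ, 0 < r → r < Real.exp (-2) → ∀ n : ℕ, 0 < n →
      ∀ ε : ℝ, C * (n : ℝ) ^ (-(1 : ℝ) / 2) < ε →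
        (∃ N : Finset (ℝ → ℝ), N.card ≤ 2 ^ (n - 1) ∧
          ∀ f : ℝ → ℝ, Measurable f →
            (∫⁻ s in Set.Ioc (0 : ℝ) r, ENNReal.ofReal (f s ^ 2)) ≤ 1 →
            ∃ g ∈ N, ∀ t ∈ Set.Icc (0 : ℝ) r, |Vint f t - g t| ≤ ε) ∧
        (∃ N : Finset (ℝ → ℝ), N.card ≤ 2 ^ (n - 1) ∧
          ∀ μ : MeasureTheory.SignedMeasure ℝ,
            μ.totalVariation (Set.Icc (0 : ℝ) r)ᶜ = 0 →
            μ.totalVariation Set.univ ≤ 1 →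
            ∃ g ∈ N,
              (∫⁻ s in Set.Ioc (0 : ℝ) r, ENNReal.ofReal ((VstarInt μ s - g s) ^ 2)) ≤
                ENNReal.ofReal (ε ^ 2)) := by
  obtain ⟨c, hc, hnets⟩ := exists_criticalPotentials_nets
  refine ⟨2 * √c, by positivity, fun r _ hr n hn ε hε ↦ ?_⟩
  have hn' : (0 : ℝ) < n := by exact_mod_cast hn
  have hε0 : 0 < ε := lt_of_le_of_lt (by positivity) hε
  have hcard {m : ℕ} (hm : (m : ℝ) ≤ Real.exp (c / ε ^ 2)) : m ≤ 2 ^ (n - 1) :=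
    le_two_pow_sub_one_of_le_exp hn.ne'
      (hm.trans (Real.exp_le_exp.2 (div_sq_le_div_four_of_mul_rpow_lt hc hn' hε)))
  obtain ⟨⟨N, hNcard, hN⟩, P, hPcard, hP⟩ := hnets ε hε0
  obtain ⟨MV, hMV, hV⟩ := exists_finset_abs_Vint_sub_le hr hP
  obtain ⟨MVstar, hMVstar, hVstar⟩ := exists_finset_lintegral_VstarInt_sub_sq_le hr hN
  exact ⟨⟨MV, hMV.trans (hcard hPcard), hV⟩, MVstar, hMVstar.trans (hcard hNcard), hVstar⟩
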